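/- arXiv:2601.20018 — 6 statements merged into one kernel-verified Lean document; each statement's English description precedes it below -/
import Mathlib

section
/- Let A = [a(i,j)] ∈ R^{N×N} be a fixed nonzero matrix, and define B_A := max_{i,j∈[N]} |a(i,j)| and V_A := (1/N) Σ_{i,j∈[N]} a(i,j)². Let G_1,...,G_N be i.i.d. standard Gaussian random variables independent of π. Then for every real λ with |λ| < √2 / B_A: E[ exp( λ Σ_{i=1}^N a(i,π(i)) G_i ) ] ≤ exp( ( V_A λ² − V_A B_A² λ⁴ / 4 ) / ( 2 ( 1 − B_A² λ² / 2 ) ) ). -/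
open scoped BigOperators Classical ENNReal
open MeasureTheory ProbabilityTheory

/-- Standard Gaussian product measure on `Fin n → ℝ` (i.i.d. `N(0,1)` coordinates). -/
noncomputable def gaussPi (n : ℕ) : Measure (Fin n → ℝ) :=
  Measure.pi (fun _ : Fin n => gaussianReal 0 1)

lemma aux_exp_bound (c b : ℝ) (hc : 0 ≤ c) (hcb : c ≤ b) (hb : b < 1) :
    Real.exp c ≤ 1 + c * ((1 - b / 2) / (1 - b)) := by
  have h1 := Real.exp_bound' hc (by linarith) (n := 3) (by norm_num)
  simp [Finset.sum_range_succ, Nat.factorial] at h1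
  have hmono : 1 + c / 2 + c ^ 2 / 2 ≤ (1 - b / 2) / (1 - b) := by
    rw [le_div_iff₀ (by linarith)]
    have hc1 : c < 1 := by linarith
    have h2 : 1 + c / 2 + c ^ 2 / 2 ≤ 1 + b / 2 + b ^ 2 / 2 := by nlinarith
    have h3 : (1 + c / 2 + c ^ 2 / 2) * (1 - b) ≤ (1 + b / 2 + b ^ 2 / 2) * (1 - b) :=
      mul_le_mul_of_nonneg_right h2 (by linarith)
    have hb3 : 0 ≤ b ^ 3 := pow_nonneg (by linarith) 3
    nlinarith
  have h4 := mul_le_mul_of_nonneg_left hmono hc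
  have hc3 : 0 ≤ c ^ 3 := pow_nonneg hc 3
  nlinarith

lemma aux_amgm (N : ℕ) (r : Fin N → ℝ) (hr : ∀ i, 0 ≤ r i) (v : ℝ)
    (hv : ∑ i, r i = N * v) (t : ℝ) (hm : 0 < t + v) (ht : 0 < t) :
    ∏ i, (t + r i) ≤ (t + v) ^ N := by
  have h : ∏ i, ((t + r i) / (t + v)) ≤ 1 := by
    calc ∏ i, ((t + r i) / (t + v)) ≤ ∏ i, Real.exp ((t + r i) / (t + v) - 1) := by
          apply Finset.prod_le_prod
          · intro i _
            have := hr i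
            positivity
          · intro i _
            have := Real.add_one_le_exp ((t + r i) / (t + v) - 1)
            linarith
      _ = 1 := by
          rw [← Real.exp_sum, Finset.sum_sub_distrib, ← Finset.sum_div, Finset.sum_add_distrib, hv]
          simp only [Finset.sum_const, Finset.card_univ, Fintype.card_fin, nsmul_eq_mul, mul_one]
          rw [← mul_add, mul_div_assoc, div_self hm.ne']
          simp
  rw [Finset.prod_div_distrib] at h
  simp only [Finset.prod_const, Finset.card_univ, Fintype.card_fin] at h
  rwa [div_le_one (by positivity)] at h

lemma aux_int_pow (k : ℕ) :
    IntegrableOn (fun t : ℝ => t ^ k * Real.exp (-t)) (Set.Ioi 0) ∧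
    ∫ t in Set.Ioi (0 : ℝ), t ^ k * Real.exp (-t) = (k.factorial : ℝ) := by
  have h1 := Real.GammaIntegral_convergent (s := (k : ℝ) + 1) (by positivity)
  have h2 := Real.Gamma_eq_integral (s := (k : ℝ) + 1) (by positivity)
  rw [Real.Gamma_nat_eq_factorial] at h2
  simp only [add_sub_cancel_right, Real.rpow_natCast] at h1 h2
  constructor
  · refine h1.congr_fun (fun t _ => ?_) measurableSet_Ioi
    simp [mul_comm]
  · rw [h2]
    congr 1
    ext t
    simp [mul_comm]

lemma aux_sym (N : ℕ) (r : Fin N → ℝ) (hr : ∀ i, 0 ≤ r i) (v : ℝ) (hv0 : 0 ≤ v)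
    (hv : ∑ i, r i = N * v) :
    ∑ S : Finset (Fin N), (∏ i ∈ S, r i) * ((N - S.card).factorial : ℝ)
      ≤ N.factorial * Real.exp v := by
  have e1 : ∀ t : ℝ, (∏ i, (t + r i)) * Real.exp (-t)
      = ∑ S : Finset (Fin N), (∏ i ∈ S, r i) * (t ^ (N - S.card) * Real.exp (-t)) := by
    intro t
    have : ∏ i, (t + r i) = ∏ i, (r i + t) := by simp_rw [add_comm]
    rw [this, Fintype.prod_add, Finset.sum_mul]
    refine Finset.sum_congr rfl fun S _ => ?_
    simp [Finset.card_compl, mul_assoc]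
  have e2 : ∀ t : ℝ, (t + v) ^ N * Real.exp (-t)
      = ∑ m ∈ Finset.range (N + 1), (v ^ m * N.choose m) * (t ^ (N - m) * Real.exp (-t)) := by
    intro t
    rw [add_comm, add_pow, Finset.sum_mul]
    refine Finset.sum_congr rfl fun m _ => ?_
    ring
  have i1 : IntegrableOn (fun t : ℝ => (∏ i, (t + r i)) * Real.exp (-t)) (Set.Ioi 0) := by
    simp_rw [e1]
    exact integrable_finsetSum _ fun S _ => (aux_int_pow _).1.const_mul _
  have i2 : IntegrableOn (fun t : ℝ => (t + v) ^ N * Real.exp (-t)) (Set.Ioi 0) := by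
    simp_rw [e2]
    exact integrable_finsetSum _ fun S _ => (aux_int_pow _).1.const_mul _
  have key : ∫ t in Set.Ioi (0 : ℝ), (∏ i, (t + r i)) * Real.exp (-t)
      ≤ ∫ t in Set.Ioi (0 : ℝ), (t + v) ^ N * Real.exp (-t) := by
    apply setIntegral_mono_on i1 i2 measurableSet_Ioi
    intro t ht
    have ht : 0 < t := ht
    exact mul_le_mul_of_nonneg_right (aux_amgm N r hr v hv t (by linarith) ht) (Real.exp_pos _).le
  simp_rw [e1, e2] at key
  rw [integral_finsetSum _ fun S _ => (aux_int_pow _).1.const_mul _,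
    integral_finsetSum _ fun S _ => (aux_int_pow _).1.const_mul _] at key
  simp_rw [integral_const_mul, (aux_int_pow _).2] at key
  refine key.trans ?_
  have h3 := Real.sum_le_exp_of_nonneg hv0 (N + 1)
  refine le_trans (le_of_eq ?_) (mul_le_mul_of_nonneg_left h3 (Nat.cast_nonneg _))
  rw [Finset.mul_sum]
  refine Finset.sum_congr rfl fun m hm => ?_
  have hm' : m ≤ N := by simpa [Nat.lt_succ_iff] using hm
  have h4 := Nat.choose_mul_factorial_mul_factorial hm'
  have h5 : ((N.choose m : ℝ)) * m.factorial * (N - m).factorial = N.factorial := by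
    exact_mod_cast h4
  rw [← h5]
  have : (m.factorial : ℝ) ≠ 0 := by positivity
  field_simp

lemma aux_fiber (N : ℕ) (S : Finset (Fin N)) (f : S → Fin N) :
    (Finset.univ.filter fun σ : Equiv.Perm (Fin N) => (fun i : S => σ i) = f).card
      ≤ (N - S.card).factorial := by
  by_cases h : ∃ σ₀ : Equiv.Perm (Fin N), (fun i : S => σ₀ i) = f
  · obtain ⟨σ₀, rfl⟩ := h
    have hc : (N - S.card).factorial
        = Fintype.card {τ : Equiv.Perm (Fin N) // ∀ a, ¬ (a ∉ S) → τ a = a} := by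
      rw [← Fintype.card_congr (Equiv.Perm.subtypeEquivSubtypePerm fun a => a ∉ S),
        Fintype.card_perm]
      congr 1
      rw [Fintype.card_subtype_compl]
      simp
    rw [hc, Fintype.card_subtype]
    refine Finset.card_le_card_of_injOn (fun σ => σ₀⁻¹ * σ) ?_ ?_
    · intro σ hσ
      simp only [Finset.coe_filter, Finset.mem_univ, true_and, Set.mem_setOf_eq, not_not] at hσ ⊢
      intro a ha
      have := congrFun hσ ⟨a, ha⟩
      simp at this
      simp [this]
    · intro σ _ τ _ h
      exact mul_left_cancel h
  · rw [Finset.filter_false_of_mem]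
    · simp
    · intro σ _ hσ
      exact h ⟨σ, hσ⟩

lemma aux_sub (N : ℕ) (x : Fin N → Fin N → ℝ) (hx : ∀ i j, 0 ≤ x i j) (S : Finset (Fin N)) :
    ∑ σ : Equiv.Perm (Fin N), ∏ i ∈ S, x i (σ i)
      ≤ (∏ i ∈ S, ∑ j, x i j) * ((N - S.card).factorial : ℝ) := by
  rw [← Finset.prod_coe_sort S (fun i => ∑ j, x i j), Fintype.prod_sum, Finset.sum_mul]
  rw [← Finset.sum_fiberwise (s := Finset.univ)
    (g := fun σ : Equiv.Perm (Fin N) => (fun i : S => σ i))]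
  refine Finset.sum_le_sum fun f _ => ?_
  have h1 : ∀ σ ∈ Finset.univ.filter (fun σ : Equiv.Perm (Fin N) => (fun i : S => σ i) = f),
      ∏ i ∈ S, x i (σ i) = ∏ i : S, x i (f i) := by
    intro σ hσ
    simp only [Finset.mem_filter, Finset.mem_univ, true_and] at hσ
    rw [← Finset.prod_coe_sort S (fun i => x i (σ i)), ← hσ]
  rw [Finset.sum_congr rfl h1, Finset.sum_const, nsmul_eq_mul, mul_comm]
  exact mul_le_mul_of_nonneg_left (by exact_mod_cast aux_fiber N S f)
    (Finset.prod_nonneg fun i _ => hx _ _)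

lemma aux_perm (N : ℕ) (hN : 0 < N) (x : Fin N → Fin N → ℝ) (hx : ∀ i j, 0 ≤ x i j) :
    ∑ σ : Equiv.Perm (Fin N), ∏ i, (1 + x i (σ i))
      ≤ N.factorial * Real.exp ((∑ i, ∑ j, x i j) / N) := by
  simp_rw [Finset.prod_one_add]
  rw [Finset.sum_comm, Finset.powerset_univ]
  refine (Finset.sum_le_sum fun S _ => aux_sub N x hx S).trans ?_
  have hN' : (N : ℝ) ≠ 0 := by positivity
  apply aux_sym
  · exact fun i => Finset.sum_nonneg fun j _ => hx i j
  · exact div_nonneg (Finset.sum_nonneg fun i _ => Finset.sum_nonneg fun j _ => hx i j)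
      (Nat.cast_nonneg _)
  · field_simp

lemma aux_gauss (N : ℕ) (c : Fin N → ℝ) (lam : ℝ) :
    ∫⁻ g, ENNReal.ofReal (Real.exp (lam * ∑ i : Fin N, c i * g i)) ∂(gaussPi N)
      = ENNReal.ofReal (∏ i, Real.exp (lam ^ 2 * c i ^ 2 / 2)) := by
  have e : ∀ g : Fin N → ℝ, Real.exp (lam * ∑ i : Fin N, c i * g i)
      = ∏ i, Real.exp ((lam * c i) * g i) := by
    intro g
    rw [← Real.exp_sum, Finset.mul_sum]
    simp [mul_assoc]
  simp_rw [e]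
  have hint : Integrable (fun g : Fin N → ℝ => ∏ i, Real.exp ((lam * c i) * g i)) (gaussPi N) :=
    Integrable.fintype_prod (f := fun i (y : ℝ) => Real.exp ((lam * c i) * y))
      (fun i => integrable_exp_mul_gaussianReal (lam * c i))
  rw [← ofReal_integral_eq_lintegral_ofReal hint
    (Filter.Eventually.of_forall fun g => Finset.prod_nonneg fun i _ => (Real.exp_pos _).le)]
  congr 1
  unfold gaussPi
  rw [integral_fintype_prod_eq_prod (f := fun i (y : ℝ) => Real.exp ((lam * c i) * y))]
  refine Finset.prod_congr rfl fun i _ => ?_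
  have := congrFun (mgf_id_gaussianReal (μ := 0) (v := 1)) (lam * c i)
  simp only [mgf, id] at this
  rw [this]
  congr 1
  simp
  ring

/-- MGF bound for a Gaussian-randomized single-indexed permutation statistic:
`π` uniform on `S_N` and `G₁,…,G_N` i.i.d. standard Gaussians independent of
`π`.  The expectation over `π` is the average over `S_N`, and the Gaussian
expectation is taken with respect to the product Gaussian measure. -/
theorem gaussian_randomized_mgf
    (N : ℕ) (hN : 0 < N)
    (a : Fin N → Fin N → ℝ) (hnonzero : ∃ i j, a i j ≠ 0)
    (B V : ℝ)
    (hB : B = Finset.univ.sup'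
        ⟨((⟨0, hN⟩ : Fin N), (⟨0, hN⟩ : Fin N)), Finset.mem_univ _⟩
        (fun p : Fin N × Fin N => |a p.1 p.2|))
    (hV : V = (∑ i, ∑ j, (a i j) ^ 2) / (N : ℝ))
    (lam : ℝ) (hlam : |lam| < Real.sqrt 2 / B) :
    (∑ σ : Equiv.Perm (Fin N),
        ∫⁻ g, ENNReal.ofReal (Real.exp (lam * ∑ i : Fin N, a i (σ i) * g i))
          ∂(gaussPi N)) / (Nat.factorial N : ℝ≥0∞)
      ≤ ENNReal.ofReal (Real.exp
          ((V * lam ^ 2 - V * B ^ 2 * lam ^ 4 / 4) / (2 * (1 - B ^ 2 * lam ^ 2 / 2)))) := by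
  have hle : ∀ i j, |a i j| ≤ B := by
    intro i j
    rw [hB]
    exact Finset.le_sup' (fun p : Fin N × Fin N => |a p.1 p.2|) (Finset.mem_univ (i, j))
  have hBpos : 0 < B := by
    obtain ⟨i, j, h⟩ := hnonzero
    exact (abs_pos.mpr h).trans_le (hle i j)
  rw [lt_div_iff₀ hBpos] at hlam
  have hb : B ^ 2 * lam ^ 2 / 2 < 1 := by
    have h1 : (|lam| * B) ^ 2 < Real.sqrt 2 ^ 2 :=
      pow_lt_pow_left₀ hlam (by positivity) (by norm_num)
    rw [Real.sq_sqrt (by norm_num), mul_pow, sq_abs] at h1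
    linarith
  set b := B ^ 2 * lam ^ 2 / 2 with hbdef
  set K := (1 - b / 2) / (1 - b) with hK
  have hK0 : 0 ≤ K := by
    apply div_nonneg <;> linarith
  have hterm : ∀ i j, Real.exp (lam ^ 2 * a i j ^ 2 / 2)
      ≤ 1 + (lam ^ 2 * a i j ^ 2 / 2) * K := by
    intro i j
    apply aux_exp_bound _ b (by positivity) _ hb
    have : a i j ^ 2 ≤ B ^ 2 := by
      rw [← sq_abs]
      exact pow_le_pow_left₀ (abs_nonneg _) (hle i j) 2
    have := mul_le_mul_of_nonneg_left this (sq_nonneg lam)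
    rw [hbdef]
    linarith
  have hmain : ∑ σ : Equiv.Perm (Fin N), ∏ i, Real.exp (lam ^ 2 * a i (σ i) ^ 2 / 2)
      ≤ N.factorial * Real.exp ((V * lam ^ 2 - V * B ^ 2 * lam ^ 4 / 4) / (2 * (1 - b))) := by
    refine (Finset.sum_le_sum fun σ _ => Finset.prod_le_prod
      (fun i _ => (Real.exp_pos _).le) (fun i _ => hterm i (σ i))).trans ?_
    refine (aux_perm N hN (fun i j => (lam ^ 2 * a i j ^ 2 / 2) * K)
      (fun i j => by positivity)).trans (le_of_eq ?_)
    congr 2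
    have : ∑ i, ∑ j, (lam ^ 2 * a i j ^ 2 / 2) * K
        = (lam ^ 2 / 2 * K) * ∑ i, ∑ j, a i j ^ 2 := by
      simp_rw [Finset.mul_sum]
      refine Finset.sum_congr rfl fun i _ => Finset.sum_congr rfl fun j _ => by ring
    rw [this, mul_div_assoc, ← hV, hK]
    have : 1 - b ≠ 0 := by linarith
    field_simp
    rw [hbdef]
    ring
  simp_rw [aux_gauss]
  rw [← ENNReal.ofReal_sum_of_nonneg
    (fun σ _ => Finset.prod_nonneg fun i _ => (Real.exp_pos _).le)]
  apply ENNReal.div_le_of_le_mul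
  rw [← ENNReal.ofReal_natCast, ← ENNReal.ofReal_mul (Real.exp_pos _).le]
  apply ENNReal.ofReal_le_ofReal
  rw [mul_comm]
  exact hmain
end

section
/- Let A = [a(i,j)] ∈ R^{N×N} be a fixed matrix with all entries in [−1,1], let f(π) := Σ_{i=1}^N a(i,π(i)), and let V_A := (1/N) Σ_{i,j∈[N]} a(i,j)². Then for every real λ with |λ| ≤ 1/3: E[ exp( λ ( f(π) − E[f(π)] ) ) ] ≤ exp( 12 V_A λ² ). -/
open scoped BigOperators Classical

/-- Expectation of `f` under the uniform distribution on `S_N`. -/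
noncomputable def permExp (N : ℕ) (f : Equiv.Perm (Fin N) → ℝ) : ℝ :=
  (∑ σ : Equiv.Perm (Fin N), f σ) / (Nat.factorial N : ℝ)

namespace HoefAux

/-- The Hoeffding statistic. -/
noncomputable def F {N : ℕ} (a : Fin N → Fin N → ℝ) (σ : Equiv.Perm (Fin N)) : ℝ := ∑ i, a i (σ i)

/-- Increment under a transposition. -/
noncomputable def D {N : ℕ} (a : Fin N → Fin N → ℝ) (σ : Equiv.Perm (Fin N)) (i j : Fin N) : ℝ :=
  a i (σ i) + a j (σ j) - a i (σ j) - a j (σ i)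

lemma F_swap {N : ℕ} (a : Fin N → Fin N → ℝ) (σ : Equiv.Perm (Fin N)) (i j : Fin N) :
    F a (σ * Equiv.swap i j) = F a σ - D a σ i j := by
  by_cases hij : i = j
  · subst hij
    rw [Equiv.swap_self]
    have : σ * (Equiv.refl (Fin N)) = σ := mul_one σ
    rw [this]
    simp [D]
  · unfold F D
    have h1 : ∀ g : Fin N → ℝ, ∑ k, g k = g i + (g j + ∑ k ∈ (Finset.univ.erase i).erase j, g k) := by
      intro g
      rw [Finset.add_sum_erase _ _ (by simp [Ne.symm hij]), Finset.add_sum_erase _ _ (by simp)]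
    rw [h1 (fun k => a k ((σ * Equiv.swap i j) k)), h1 (fun k => a k (σ k))]
    have h2 : ∑ k ∈ (Finset.univ.erase i).erase j, a k ((σ * Equiv.swap i j) k)
        = ∑ k ∈ (Finset.univ.erase i).erase j, a k (σ k) := by
      apply Finset.sum_congr rfl
      intro k hk
      simp only [Finset.mem_erase, Finset.mem_univ, and_true] at hk
      rw [Equiv.Perm.mul_apply, Equiv.swap_apply_of_ne_of_ne hk.2 hk.1]
    rw [h2]
    simp [Equiv.Perm.mul_apply]
    ring

lemma sum_perm {N : ℕ} (g : Fin N → Fin N → ℝ) (σ : Equiv.Perm (Fin N)) :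
    ∑ i, ∑ j, g i (σ j) = ∑ i, ∑ j, g i j := by
  apply Finset.sum_congr rfl
  intro i _
  exact Equiv.sum_comp σ (g i)

lemma sum_four {N : ℕ} (a : Fin N → Fin N → ℝ) (σ : Equiv.Perm (Fin N)) (c : ℝ) :
    ∑ i, ∑ j, (a i (σ i) + a j (σ j) + c * (a i (σ j) + a j (σ i)))
      = 2 * N * F a σ + c * (2 * ∑ i, ∑ j, a i j) := by
  have h1 : ∑ i, ∑ j, a j (σ i) = ∑ i, ∑ j, a i j := by
    rw [Finset.sum_comm]; exact sum_perm a σ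
  simp only [Finset.sum_add_distrib, ← Finset.mul_sum]
  rw [h1, sum_perm a σ]
  simp [F, ← Finset.mul_sum]
  ring

lemma sum_D {N : ℕ} (a : Fin N → Fin N → ℝ) (σ : Equiv.Perm (Fin N)) :
    ∑ i, ∑ j, D a σ i j = 2 * N * F a σ - 2 * ∑ i, ∑ j, a i j := by
  have := sum_four a σ (-1)
  rw [show 2 * N * F a σ - 2 * ∑ i, ∑ j, a i j
    = 2 * N * F a σ + (-1) * (2 * ∑ i, ∑ j, a i j) by ring, ← this]
  refine Finset.sum_congr rfl fun i _ => Finset.sum_congr rfl fun j _ => ?_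
  unfold D; ring

lemma D_swap {N : ℕ} (a : Fin N → Fin N → ℝ) (σ : Equiv.Perm (Fin N)) (i j : Fin N) :
    D a (σ * Equiv.swap i j) i j = - D a σ i j := by
  simp [D, Equiv.Perm.mul_apply]; ring

lemma reindex {N : ℕ} (g : Equiv.Perm (Fin N) → ℝ) (i j : Fin N) :
    ∑ σ, g (σ * Equiv.swap i j) = ∑ σ, g σ :=
  Equiv.sum_comp (Equiv.mulRight (Equiv.swap i j)) g

lemma comm3 {N : ℕ} (g : Equiv.Perm (Fin N) → Fin N → Fin N → ℝ) :
    ∑ σ, ∑ i, ∑ j, g σ i j = ∑ i, ∑ j, ∑ σ, g σ i j := by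
  rw [Finset.sum_comm]
  exact Finset.sum_congr rfl fun i _ => Finset.sum_comm

lemma key {N : ℕ} (a : Fin N → Fin N → ℝ) (h : Equiv.Perm (Fin N) → ℝ) :
    2 * ∑ σ, (2 * N * F a σ - 2 * ∑ i, ∑ j, a i j) * h σ
      = ∑ i, ∑ j, ∑ σ, D a σ i j * (h σ - h (σ * Equiv.swap i j)) := by
  have e1 : ∑ σ, (2 * N * F a σ - 2 * ∑ i, ∑ j, a i j) * h σ
      = ∑ i, ∑ j, ∑ σ, D a σ i j * h σ := by
    rw [← comm3]
    refine Finset.sum_congr rfl fun σ _ => ?_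
    rw [← sum_D, Finset.sum_mul]
    exact Finset.sum_congr rfl fun i _ => Finset.sum_mul _ _ _
  rw [e1, Finset.mul_sum]
  refine Finset.sum_congr rfl fun i _ => ?_
  rw [Finset.mul_sum]
  refine Finset.sum_congr rfl fun j _ => ?_
  have e2 : ∑ σ, D a σ i j * h (σ * Equiv.swap i j) = - ∑ σ, D a σ i j * h σ := by
    rw [← reindex (fun σ => D a σ i j * h σ) i j, ← Finset.sum_neg_distrib]
    refine Finset.sum_congr rfl fun σ _ => ?_
    simp only [D_swap]; ring
  simp only [mul_sub, Finset.sum_sub_distrib]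
  rw [e2]; ring

lemma exp_aux (d : ℝ) (hd : 0 ≤ d) : Real.exp d - 1 ≤ d * (Real.exp d + 1) / 2 := by
  have hmono : MonotoneOn (fun x : ℝ => x * (Real.exp x + 1) / 2 - Real.exp x) (Set.Ici 0) := by
    have hder : ∀ x : ℝ, HasDerivAt (fun x : ℝ => x * (Real.exp x + 1) / 2 - Real.exp x)
        ((1 * (Real.exp x + 1) + x * Real.exp x) / 2 - Real.exp x) x := by
      intro x
      exact (((hasDerivAt_id x).mul ((Real.hasDerivAt_exp x).add_const 1)).div_const 2).sub
        (Real.hasDerivAt_exp x)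
    apply monotoneOn_of_deriv_nonneg (convex_Ici 0)
    · exact fun x _ => (hder x).continuousAt.continuousWithinAt
    · exact fun x _ => (hder x).differentiableAt.differentiableWithinAt
    · intro x _
      rw [(hder x).deriv]
      have h1 := Real.add_one_le_exp (-x)
      have h2 : Real.exp (-x) * Real.exp x = 1 := by rw [← Real.exp_add]; simp
      nlinarith [Real.exp_pos x]
  have := hmono (Set.mem_Ici.2 le_rfl) (Set.mem_Ici.2 hd) hd
  simp at this
  linarith

lemma exp_tri' (x y : ℝ) (h : y ≤ x) :
    (x - y) * (Real.exp x - Real.exp y) ≤ (x - y) ^ 2 * (Real.exp x + Real.exp y) / 2 := by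
  have h1 := exp_aux (x - y) (by linarith)
  have h2 : Real.exp x = Real.exp (x - y) * Real.exp y := by rw [← Real.exp_add]; simp
  rw [h2]
  have h3 := mul_le_mul_of_nonneg_left h1
    (mul_nonneg (sub_nonneg.2 h) (Real.exp_pos y).le)
  nlinarith

lemma exp_tri (x y : ℝ) :
    (x - y) * (Real.exp x - Real.exp y) ≤ (x - y) ^ 2 * (Real.exp x + Real.exp y) / 2 := by
  rcases le_total y x with h | h
  · exact exp_tri' x y h
  · have := exp_tri' y x h
    nlinarith

/-- Main exchangeable-pair bound. -/
lemma pair_bound {N : ℕ} (a : Fin N → Fin N → ℝ) (t c : ℝ) (ht : 0 < t) :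
    ∑ σ, (2 * N * F a σ - 2 * ∑ i, ∑ j, a i j) * Real.exp (t * (F a σ - c))
      ≤ t / 2 * ∑ σ, (∑ i, ∑ j, D a σ i j ^ 2) * Real.exp (t * (F a σ - c)) := by
  have hk := key a (fun σ => Real.exp (t * (F a σ - c)))
  have e1 : ∑ σ, (∑ i, ∑ j, D a σ i j ^ 2) * Real.exp (t * (F a σ - c))
      = ∑ i, ∑ j, ∑ σ, D a σ i j ^ 2 * Real.exp (t * (F a σ - c)) := by
    rw [← comm3]
    refine Finset.sum_congr rfl fun σ _ => ?_
    rw [Finset.sum_mul]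
    exact Finset.sum_congr rfl fun i _ => Finset.sum_mul _ _ _
  have e2 : ∑ i, ∑ j, ∑ σ, D a σ i j * (Real.exp (t * (F a σ - c))
        - Real.exp (t * (F a (σ * Equiv.swap i j) - c)))
      ≤ ∑ i, ∑ j, t * ∑ σ, D a σ i j ^ 2 * Real.exp (t * (F a σ - c)) := by
    refine Finset.sum_le_sum fun i _ => Finset.sum_le_sum fun j _ => ?_
    have e3 : ∑ σ, D a σ i j ^ 2 * Real.exp (t * (F a (σ * Equiv.swap i j) - c))
        = ∑ σ, D a σ i j ^ 2 * Real.exp (t * (F a σ - c)) := by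
      rw [← reindex (fun σ => D a σ i j ^ 2 * Real.exp (t * (F a σ - c))) i j]
      refine Finset.sum_congr rfl fun σ _ => ?_
      simp only [D_swap]; ring
    have e4 : t * ∑ σ, D a σ i j ^ 2 * Real.exp (t * (F a σ - c))
        = ∑ σ, (t / 2) * (D a σ i j ^ 2 * Real.exp (t * (F a σ - c))
          + D a σ i j ^ 2 * Real.exp (t * (F a (σ * Equiv.swap i j) - c))) := by
      rw [← Finset.mul_sum, Finset.sum_add_distrib, e3]; ring
    rw [e4]
    refine Finset.sum_le_sum fun σ _ => ?_
    have h := exp_tri (t * (F a σ - c)) (t * (F a (σ * Equiv.swap i j) - c))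
    have h5 : t * (F a σ - c) - t * (F a (σ * Equiv.swap i j) - c) = t * D a σ i j := by
      rw [F_swap]; ring
    rw [h5] at h
    refine le_of_mul_le_mul_left ?_ ht
    linarith
  simp only [← Finset.mul_sum] at e2
  rw [e1]
  linarith

lemma sum_F {N : ℕ} (a : Fin N → Fin N → ℝ) :
    N * ∑ σ, F a σ = (Nat.factorial N : ℝ) * ∑ i, ∑ j, a i j := by
  have hk := key a (fun _ => 1)
  simp [← Finset.mul_sum, Fintype.card_perm] at hk
  linarith

lemma hasDeriv_mgf {N : ℕ} (a : Fin N → Fin N → ℝ) (c t : ℝ) :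
    HasDerivAt (fun t => ∑ σ, Real.exp (t * (F a σ - c)))
      (∑ σ, (F a σ - c) * Real.exp (t * (F a σ - c))) t := by
  apply HasDerivAt.fun_sum
  intro σ _
  have := ((hasDerivAt_id t).mul_const (F a σ - c)).exp
  simp only [id] at this
  rw [one_mul, mul_comm] at this
  exact this

/-- Gronwall-type comparison. -/
lemma gronwall (m m' p p' : ℝ → ℝ) (T : ℝ) (hT : 0 ≤ T)
    (hm : ∀ t, HasDerivAt m (m' t) t) (hp : ∀ t, HasDerivAt p (p' t) t)
    (h : ∀ t, 0 < t → t < T → m' t ≤ p' t * m t) :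
    m T * Real.exp (-p T) ≤ m 0 * Real.exp (-p 0) := by
  have hder : ∀ t, HasDerivAt (fun t => m t * Real.exp (-p t))
      (m' t * Real.exp (-p t) + m t * (Real.exp (-p t) * (-p' t))) t :=
    fun t => (hm t).mul (hp t).neg.exp
  have : AntitoneOn (fun t => m t * Real.exp (-p t)) (Set.Icc 0 T) := by
    apply antitoneOn_of_deriv_nonpos (convex_Icc 0 T)
    · exact fun x _ => (hder x).continuousAt.continuousWithinAt
    · exact fun x _ => (hder x).differentiableAt.differentiableWithinAt
    · intro x hx
      rw [interior_Icc] at hx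
      rw [(hder x).deriv]
      nlinarith [h x hx.1 hx.2, Real.exp_pos (-p x)]
  exact this (Set.left_mem_Icc.2 hT) (Set.right_mem_Icc.2 hT) hT

/-- Nonnegative case, up to `t = 1/2`. -/
lemma nonneg_case {N : ℕ} (hN : 0 < N) (b : Fin N → Fin N → ℝ)
    (hb0 : ∀ i j, 0 ≤ b i j) (hb1 : ∀ i j, b i j ≤ 1)
    (V : ℝ) (hV : N * V = ∑ i, ∑ j, b i j) :
    ∑ σ, Real.exp (1 / 2 * F b σ) ≤ (Nat.factorial N : ℝ) * Real.exp (3 / 2 * V) := by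
  have hN' : (0 : ℝ) < N := by exact_mod_cast hN
  have hF : ∀ σ, 0 ≤ F b σ := fun σ => Finset.sum_nonneg fun i _ => hb0 _ _
  have hV0 : 0 ≤ V := by
    have : 0 ≤ N * V := by
      rw [hV]; exact Finset.sum_nonneg fun i _ => Finset.sum_nonneg fun j _ => hb0 _ _
    exact nonneg_of_mul_nonneg_right this hN'
  have hg := gronwall (fun t => ∑ σ, Real.exp (t * (F b σ - 0)))
    (fun t => ∑ σ, (F b σ - 0) * Real.exp (t * (F b σ - 0)))
    (fun t => t * (3 * V)) (fun t => 1 * (3 * V)) (1 / 2) (by norm_num)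
    (fun t => hasDeriv_mgf b 0 t) (fun t => (hasDerivAt_id t).mul_const _) ?_
  · simp [Fintype.card_perm] at hg
    rw [Real.exp_neg, ← div_eq_mul_inv, div_le_iff₀ (Real.exp_pos _)] at hg
    rw [show (3 / 2 * V : ℝ) = 2⁻¹ * (3 * V) by ring, show (1 / 2 : ℝ) = 2⁻¹ by norm_num]
    exact hg
  · intro t ht0 ht1
    have hp := pair_bound b t 0 ht0
    set M := ∑ σ, Real.exp (t * (F b σ - 0)) with hM
    set M' := ∑ σ, (F b σ - 0) * Real.exp (t * (F b σ - 0)) with hM'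
    have hM0 : 0 ≤ M := Finset.sum_nonneg fun σ _ => (Real.exp_pos _).le
    have hM'0 : 0 ≤ M' := Finset.sum_nonneg fun σ _ =>
      mul_nonneg (by simpa using hF σ) (Real.exp_pos _).le
    have l1 : ∑ σ, (2 * N * F b σ - 2 * ∑ i, ∑ j, b i j) * Real.exp (t * (F b σ - 0))
        = 2 * N * M' - 2 * N * V * M := by
      rw [← hV, hM, hM', Finset.mul_sum, Finset.mul_sum, ← Finset.sum_sub_distrib]
      refine Finset.sum_congr rfl fun σ _ => ?_
      ring
    have l2 : ∑ σ, (∑ i, ∑ j, D b σ i j ^ 2) * Real.exp (t * (F b σ - 0))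
        ≤ 4 * N * M' + 4 * N * V * M := by
      rw [hM, hM', Finset.mul_sum, Finset.mul_sum, ← Finset.sum_add_distrib]
      refine Finset.sum_le_sum fun σ _ => ?_
      have h1 : ∑ i, ∑ j, D b σ i j ^ 2 ≤ 2 * (2 * N * F b σ + 1 * (2 * ∑ i, ∑ j, b i j)) := by
        rw [← sum_four, Finset.mul_sum]
        refine Finset.sum_le_sum fun i _ => ?_
        rw [Finset.mul_sum]
        refine Finset.sum_le_sum fun j _ => ?_
        have aux : ∀ x y : ℝ, 0 ≤ x → 0 ≤ y → x ≤ 2 → y ≤ 2 → (x - y) ^ 2 ≤ 2 * (x + y) := by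
          intro x y hx hy hx2 hy2
          nlinarith [mul_nonneg hx hy, mul_nonneg hx (sub_nonneg.2 hx2),
            mul_nonneg hy (sub_nonneg.2 hy2)]
        have := aux (b i (σ i) + b j (σ j)) (b i (σ j) + b j (σ i))
          (add_nonneg (hb0 _ _) (hb0 _ _)) (add_nonneg (hb0 _ _) (hb0 _ _))
          (by linarith [hb1 i (σ i), hb1 j (σ j)]) (by linarith [hb1 i (σ j), hb1 j (σ i)])
        have e : D b σ i j = b i (σ i) + b j (σ j) - (b i (σ j) + b j (σ i)) := by
          unfold D; ring
        rw [e]; linarith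
      rw [← hV] at h1
      have := mul_le_mul_of_nonneg_right h1 (Real.exp_pos (t * (F b σ - 0))).le
      linarith
    rw [l1] at hp
    have l3 := hp.trans (mul_le_mul_of_nonneg_left l2 (by linarith))
    have l4 : (2 * N) * (M' - V * M) ≤ (2 * N) * (t * (M' + V * M)) := by linarith
    have l5 := le_of_mul_le_mul_left l4 (by linarith)
    have l6 : t * (M' + V * M) ≤ 1 / 2 * (M' + V * M) :=
      mul_le_mul_of_nonneg_right ht1.le (add_nonneg hM'0 (mul_nonneg hV0 hM0))
    show M' ≤ 1 * (3 * V) * M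
    linarith

lemma main_pos {N : ℕ} (hN : 0 < N) (a : Fin N → Fin N → ℝ)
    (ha : ∀ i j, a i j ∈ Set.Icc (-1 : ℝ) 1)
    (V : ℝ) (hV : N * V = ∑ i, ∑ j, a i j ^ 2)
    (c : ℝ) (hc : N * c = ∑ i, ∑ j, a i j) (T : ℝ) (hT : 0 ≤ T) (hT3 : T ≤ 1 / 3) :
    ∑ σ, Real.exp (T * (F a σ - c)) ≤ (Nat.factorial N : ℝ) * Real.exp (12 * V * T ^ 2) := by
  have hN' : (0 : ℝ) < N := by exact_mod_cast hN
  have hV0 : 0 ≤ V := by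
    have : 0 ≤ N * V := by
      rw [hV]; exact Finset.sum_nonneg fun i _ => Finset.sum_nonneg fun j _ => sq_nonneg _
    exact nonneg_of_mul_nonneg_right this hN'
  have hsq := nonneg_case hN (fun i j => a i j ^ 2) (fun i j => sq_nonneg _)
    (fun i j => by
      have := ha i j
      rw [sq_le_one_iff_abs_le_one, abs_le]; exact this) V hV
  have hcard : ∑ σ : Equiv.Perm (Fin N), (1 : ℝ) = (Nat.factorial N : ℝ) := by
    simp [Fintype.card_perm]
  have hmean : ∑ σ, (F a σ - c) = 0 := by
    have h1 := sum_F a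
    rw [← hc] at h1
    have h2 : (N : ℝ) * ∑ σ, (F a σ - c) = N * 0 := by
      rw [Finset.sum_sub_distrib, mul_sub, h1]
      simp [Fintype.card_perm]; ring
    exact mul_left_cancel₀ hN'.ne' h2
  have hg := gronwall (fun t => ∑ σ, Real.exp (t * (F a σ - c)))
    (fun t => ∑ σ, (F a σ - c) * Real.exp (t * (F a σ - c)))
    (fun t => 12 * V * t ^ 2) (fun t => 12 * V * (2 * t)) T hT
    (fun t => hasDeriv_mgf a c t)
    (fun t => by simpa using (hasDerivAt_pow 2 t).const_mul (12 * V)) ?_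
  · simp [Fintype.card_perm] at hg
    rw [Real.exp_neg, ← div_eq_mul_inv, div_le_iff₀ (Real.exp_pos _)] at hg
    exact hg
  · intro t ht0 ht1
    have hp := pair_bound a t c ht0
    set m := ∑ σ, Real.exp (t * (F a σ - c)) with hm
    set m' := ∑ σ, (F a σ - c) * Real.exp (t * (F a σ - c)) with hm'
    set g := F (fun i j => a i j ^ 2) with hgdef
    set K := ∑ σ, g σ * Real.exp (t * (F a σ - c)) with hK
    have hm1 : (Nat.factorial N : ℝ) ≤ m := by
      have : ∑ σ, (t * (F a σ - c) + 1) ≤ m :=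
        Finset.sum_le_sum fun σ _ => Real.add_one_le_exp _
      rw [Finset.sum_add_distrib, ← Finset.mul_sum, hmean, hcard] at this
      linarith
    have l1 : ∑ σ, (2 * N * F a σ - 2 * ∑ i, ∑ j, a i j) * Real.exp (t * (F a σ - c))
        = 2 * N * m' := by
      rw [← hc, hm', Finset.mul_sum]
      refine Finset.sum_congr rfl fun σ _ => ?_
      ring
    have l2 : ∑ σ, (∑ i, ∑ j, D a σ i j ^ 2) * Real.exp (t * (F a σ - c))
        ≤ 8 * N * K + 8 * N * V * m := by
      rw [hm, hK, Finset.mul_sum, Finset.mul_sum, ← Finset.sum_add_distrib]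
      refine Finset.sum_le_sum fun σ _ => ?_
      have h1 : ∑ i, ∑ j, D a σ i j ^ 2 ≤ 4 * (2 * N * g σ + 1 * (2 * ∑ i, ∑ j, a i j ^ 2)) := by
        rw [hgdef, ← sum_four (fun i j => a i j ^ 2), Finset.mul_sum]
        refine Finset.sum_le_sum fun i _ => ?_
        rw [Finset.mul_sum]
        refine Finset.sum_le_sum fun j _ => ?_
        have aux : ∀ x y z w : ℝ, (x + y - z - w) ^ 2
            ≤ 4 * (x ^ 2 + y ^ 2 + 1 * (z ^ 2 + w ^ 2)) := by
          intro x y z w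
          nlinarith [sq_nonneg (x - y), sq_nonneg (x + z), sq_nonneg (x + w),
            sq_nonneg (y + z), sq_nonneg (y + w), sq_nonneg (z - w)]
        exact aux _ _ _ _
      rw [← hV] at h1
      have := mul_le_mul_of_nonneg_right h1 (Real.exp_pos (t * (F a σ - c))).le
      linarith
    rw [l1] at hp
    have l3 := hp.trans (mul_le_mul_of_nonneg_left l2 (by linarith))
    have l4 : (2 * N) * m' ≤ (2 * N) * (t * (2 * K + 2 * V * m)) := by linarith
    have l5 := le_of_mul_le_mul_left l4 (by linarith)
    -- entropy step
    have l6 : 1 / 2 * K - 3 / 2 * V * m - t * m' + m ≤ (Nat.factorial N : ℝ) := by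
      have h1 : ∑ σ, Real.exp (1 / 2 * g σ - 3 / 2 * V) ≤ (Nat.factorial N : ℝ) := by
        simp only [Real.exp_sub, ← Finset.sum_div]
        rw [div_le_iff₀ (Real.exp_pos _)]
        exact hsq
      refine le_trans ?_ h1
      rw [hK, hm, hm', Finset.mul_sum, Finset.mul_sum, Finset.mul_sum, ← Finset.sum_sub_distrib,
        ← Finset.sum_sub_distrib, ← Finset.sum_add_distrib]
      refine Finset.sum_le_sum fun σ _ => ?_
      have h2 := Real.add_one_le_exp (1 / 2 * g σ - 3 / 2 * V - t * (F a σ - c))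
      have h3 := mul_le_mul_of_nonneg_right h2 (Real.exp_pos (t * (F a σ - c))).le
      rw [← Real.exp_add] at h3
      simp only [sub_add_cancel] at h3
      linarith
    have l7 : K ≤ 3 * V * m + 2 * t * m' := by linarith
    have l8 : m' ≤ t * (2 * (3 * V * m + 2 * t * m') + 2 * V * m) :=
      l5.trans (mul_le_mul_of_nonneg_left (by linarith) ht0.le)
    have l9 : m' ≤ 8 * (t * V * m) + 4 * t ^ 2 * m' := by linarith
    have hm0 : 0 ≤ m := Finset.sum_nonneg fun σ _ => (Real.exp_pos _).le
    have hX : 0 ≤ t * V * m := mul_nonneg (mul_nonneg ht0.le hV0) hm0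
    show m' ≤ 12 * V * (2 * t) * m
    rcases le_total m' 0 with h | h
    · linarith
    · have ht2 : 4 * t ^ 2 ≤ 4 / 9 := by nlinarith
      have := mul_le_mul_of_nonneg_right ht2 h
      linarith

end HoefAux

open HoefAux in
/-- Subgaussian MGF bound for a Hoeffding permutation statistic with entries
in `[-1,1]`, for `|λ| ≤ 1/3`. -/
theorem hoeffding_statistic_mgf_bounded (N : ℕ)
    (a : Fin N → Fin N → ℝ)
    (ha : ∀ i j, a i j ∈ Set.Icc (-1 : ℝ) 1)
    (VA : ℝ) (hVA : VA = (∑ i, ∑ j, (a i j) ^ 2) / (N : ℝ))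
    (lam : ℝ) (hlam : |lam| ≤ 1 / 3) :
    permExp N (fun σ => Real.exp (lam *
        ((∑ i, a i (σ i)) - permExp N (fun σ' => ∑ i, a i (σ' i)))))
      ≤ Real.exp (12 * VA * lam ^ 2) := by
  rcases Nat.eq_zero_or_pos N with h0 | hN
  · subst h0
    simp [permExp, hVA]
  have hN' : (0 : ℝ) < N := by exact_mod_cast hN
  have hfac : (0 : ℝ) < (Nat.factorial N : ℝ) := by exact_mod_cast Nat.factorial_pos N
  have hV : N * VA = ∑ i, ∑ j, a i j ^ 2 := by rw [hVA]; field_simp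
  set c := permExp N (fun σ' => ∑ i, a i (σ' i)) with hcdef
  have hc : N * c = ∑ i, ∑ j, a i j := by
    have h1 := sum_F a
    have h2 : c = (∑ σ, F a σ) / (Nat.factorial N : ℝ) := rfl
    rw [h2, ← mul_div_assoc, h1]
    field_simp
  have hmain : ∑ σ, Real.exp (lam * (F a σ - c))
      ≤ (Nat.factorial N : ℝ) * Real.exp (12 * VA * lam ^ 2) := by
    rw [abs_le] at hlam
    rcases le_total 0 lam with h | h
    · exact main_pos hN a ha VA hV c hc lam h hlam.2
    · have := main_pos hN (fun i j => - a i j)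
        (fun i j => ⟨by linarith [(ha i j).2], by linarith [(ha i j).1]⟩) VA
        (by simpa using hV) (-c) (by simp [hc]) (-lam) (by linarith) (by linarith)
      convert this using 3
      · simp [F]; ring
      · ring_nf
  unfold permExp
  rw [div_le_iff₀ hfac, mul_comm]
  exact hmain
end

section
/- Let A = [a(i,j)] ∈ R^{N×N} be a fixed matrix with all entries in [−1,1], let f(π) := Σ_{i=1}^N a(i,π(i)), and let V_A := (1/N) Σ_{i,j∈[N]} a(i,j)², assumed positive. Then (i) for every λ ≥ 0: E[ exp( λ ( f(π) − E[f(π)] ) ) ] ≤ exp( 54 V_A λ² e^{4λ} ); and consequently (ii) for every t > 0: P( f(π) − E[f(π)] ≥ t ) ≤ exp( − (t/12) · log( 1 + t / (54 V_A) ) ). -/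
open scoped BigOperators Classical

/-- Probability of an event under the uniform distribution on `S_N`. -/
noncomputable def permProb (N : ℕ) (p : Equiv.Perm (Fin N) → Prop) : ℝ :=
  ((Finset.univ.filter p).card : ℝ) / (Nat.factorial N : ℝ)

section helpers
variable {N : ℕ}

lemma hs_reindex (i j : Fin N) (F : Equiv.Perm (Fin N) → ℝ) :
    ∑ σ : Equiv.Perm (Fin N), F (σ * Equiv.swap i j) = ∑ σ, F σ :=
  Fintype.sum_equiv (Equiv.mulRight (Equiv.swap i j)) _ _ (fun _ => rfl)

lemma hs_diff (a : Fin N → Fin N → ℝ) (σ : Equiv.Perm (Fin N)) (i j : Fin N) :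
    (∑ k, a k (σ k)) - ∑ k, a k ((σ * Equiv.swap i j) k)
      = a i (σ i) + a j (σ j) - a i (σ j) - a j (σ i) := by
  by_cases hij : i = j
  · subst hij; simp
  · have hji : j ∈ Finset.univ.erase i := by simp [Ne.symm hij]
    rw [← Finset.add_sum_erase _ _ (Finset.mem_univ i), ← Finset.add_sum_erase _ _ hji,
      ← Finset.add_sum_erase Finset.univ (fun k => a k ((σ * Equiv.swap i j) k))
        (Finset.mem_univ i),
      ← Finset.add_sum_erase _ (fun k => a k ((σ * Equiv.swap i j) k)) hji]
    have : ∑ k ∈ (Finset.univ.erase i).erase j, a k ((σ * Equiv.swap i j) k)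
        = ∑ k ∈ (Finset.univ.erase i).erase j, a k (σ k) := by
      apply Finset.sum_congr rfl
      intro k hk
      simp only [Finset.mem_erase, Finset.mem_univ, and_true] at hk
      rw [Equiv.Perm.mul_apply, Equiv.swap_apply_of_ne_of_ne hk.2 hk.1]
    rw [this]
    simp only [Equiv.Perm.mul_apply, Equiv.swap_apply_left, Equiv.swap_apply_right]
    ring

lemma hs_sum4 (b : Fin N → Fin N → ℝ) (σ : Equiv.Perm (Fin N)) :
    ∑ i, ∑ j, (b i (σ i) + b j (σ j) + b i (σ j) + b j (σ i))
      = 2 * (N * ∑ i, b i (σ i) + ∑ i, ∑ j, b i j) := by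
  have h1 : ∑ i, ∑ j, b i (σ j) = ∑ i, ∑ j, b i j :=
    Finset.sum_congr rfl (fun i _ => Equiv.sum_comp σ (fun j => b i j))
  have h2 : ∑ i, ∑ j, b j (σ i) = ∑ i, ∑ j, b i j := by
    rw [Finset.sum_comm]; exact h1
  simp only [Finset.sum_add_distrib, h1, h2, Finset.sum_const, Finset.card_univ,
    Fintype.card_fin, nsmul_eq_mul, ← Finset.mul_sum]
  ring

lemma hs_drift (a : Fin N → Fin N → ℝ) (σ : Equiv.Perm (Fin N)) :
    ∑ i, ∑ j, (a i (σ i) + a j (σ j) - a i (σ j) - a j (σ i))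
      = 2 * (N * ∑ i, a i (σ i) - ∑ i, ∑ j, a i j) := by
  have h1 : ∑ i, ∑ j, a i (σ j) = ∑ i, ∑ j, a i j :=
    Finset.sum_congr rfl (fun i _ => Equiv.sum_comp σ (fun j => a i j))
  have h2 : ∑ i, ∑ j, a j (σ i) = ∑ i, ∑ j, a i j := by
    rw [Finset.sum_comm]; exact h1
  simp only [Finset.sum_add_distrib, Finset.sum_sub_distrib, h1, h2, Finset.sum_const,
    Finset.card_univ, Fintype.card_fin, nsmul_eq_mul, ← Finset.mul_sum]
  ring

lemma hs_mean (hN : 0 < N) (a : Fin N → Fin N → ℝ) :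
    N * permExp N (fun σ' => ∑ i, a i (σ' i)) = ∑ i, ∑ j, a i j := by
  have h0 : ∑ σ : Equiv.Perm (Fin N), ∑ i, ∑ j,
      (a i (σ i) + a j (σ j) - a i (σ j) - a j (σ i)) = 0 := by
    rw [Finset.sum_comm]
    apply Finset.sum_eq_zero
    intro i _
    rw [Finset.sum_comm]
    apply Finset.sum_eq_zero
    intro j _
    simp only [← hs_diff]
    rw [Finset.sum_sub_distrib, hs_reindex i j (fun σ => ∑ k, a k (σ k)), sub_self]
  simp only [hs_drift] at h0
  rw [← Finset.mul_sum, Finset.sum_sub_distrib, ← Finset.mul_sum, Finset.sum_const,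
    Finset.card_univ, Fintype.card_perm, Fintype.card_fin, nsmul_eq_mul] at h0
  unfold permExp
  have : (Nat.factorial N : ℝ) ≠ 0 := by positivity
  field_simp
  linarith

lemma hs_exp_aux (l x y : ℝ) (hl : 0 ≤ l) :
    (x - y) * (Real.exp (l * x) - Real.exp (l * y))
      ≤ l * (x - y) ^ 2 * (Real.exp (l * x) + Real.exp (l * y)) := by
  wlog h : y ≤ x generalizing x y with H
  · have := H y x (le_of_not_ge h)
    nlinarith [this]
  have h1 : Real.exp (l * y) = Real.exp (l * x) * Real.exp (-(l * (x - y))) := by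
    rw [← Real.exp_add]; congr 1; ring
  have h2 := Real.add_one_le_exp (-(l * (x - y)))
  have hx := Real.exp_pos (l * x)
  have hy := Real.exp_pos (l * y)
  have h3 : Real.exp (l * x) - Real.exp (l * y) ≤ l * (x - y) * Real.exp (l * x) := by
    rw [h1]; nlinarith
  have h4 := mul_le_mul_of_nonneg_left h3 (sub_nonneg.2 h)
  have h5 : 0 ≤ l * (x - y) ^ 2 * Real.exp (l * y) := by positivity
  nlinarith

variable (a : Fin N → Fin N → ℝ)

/-- Weighted square bound. -/
lemma hs_g (hN : 0 < N) (ha : ∀ i j, a i j ∈ Set.Icc (-1 : ℝ) 1) (c l : ℝ) (hl : 0 ≤ l) :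
    N * ∑ σ : Equiv.Perm (Fin N), (∑ i, a i (σ i) ^ 2) * Real.exp (l * ((∑ i, a i (σ i)) - c))
      ≤ Real.exp (4 * l) * (∑ i, ∑ j, a i j ^ 2) *
        ∑ σ : Equiv.Perm (Fin N), Real.exp (l * ((∑ i, a i (σ i)) - c)) := by
  set w : Equiv.Perm (Fin N) → ℝ := fun σ => Real.exp (l * ((∑ i, a i (σ i)) - c)) with hw
  have hstep : ∀ i j : Fin N, ∑ σ : Equiv.Perm (Fin N), a i (σ i) ^ 2 * w σ
      ≤ ∑ σ : Equiv.Perm (Fin N), Real.exp (4 * l) * (a i (σ j) ^ 2 * w σ) := by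
    intro i j
    rw [← hs_reindex i j (fun σ => Real.exp (4 * l) * (a i (σ j) ^ 2 * w σ))]
    apply Finset.sum_le_sum
    intro σ _
    have hd := hs_diff a σ i j
    simp only [Equiv.Perm.mul_apply, Equiv.swap_apply_right] at hd ⊢
    have : w σ ≤ Real.exp (4 * l) * w (σ * Equiv.swap i j) := by
      simp only [hw, ← Real.exp_add, Equiv.Perm.mul_apply]
      apply Real.exp_le_exp.2
      have := (ha i (σ i)).2
      have := (ha j (σ j)).2
      have := (ha i (σ j)).1
      have := (ha j (σ i)).1
      nlinarith
    nlinarith [mul_le_mul_of_nonneg_left this (sq_nonneg (a i (σ i)))]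
  calc N * ∑ σ : Equiv.Perm (Fin N), (∑ i, a i (σ i) ^ 2) * w σ
      = ∑ i, ∑ j : Fin N, ∑ σ : Equiv.Perm (Fin N), a i (σ i) ^ 2 * w σ := by
        simp only [Finset.sum_const, Finset.card_univ, Fintype.card_fin, nsmul_eq_mul,
          ← Finset.mul_sum]
        congr 1
        rw [Finset.sum_comm]
        simp only [Finset.sum_mul]
    _ ≤ ∑ i, ∑ j : Fin N, ∑ σ : Equiv.Perm (Fin N), Real.exp (4 * l) * (a i (σ j) ^ 2 * w σ) :=
        Finset.sum_le_sum fun i _ => Finset.sum_le_sum fun j _ => hstep i j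
    _ = ∑ i, ∑ σ : Equiv.Perm (Fin N), Real.exp (4 * l) * ((∑ j, a i j ^ 2) * w σ) := by
        apply Finset.sum_congr rfl
        intro i _
        rw [Finset.sum_comm]
        apply Finset.sum_congr rfl
        intro σ _
        rw [← Finset.mul_sum, ← Finset.sum_mul, Equiv.sum_comp σ (fun j => a i j ^ 2)]
    _ = _ := by
        simp only [← Finset.mul_sum]
        rw [← Finset.sum_mul]
        ring

lemma hs_deriv (hN : 0 < N) (ha : ∀ i j, a i j ∈ Set.Icc (-1 : ℝ) 1) (c l : ℝ) (hl : 0 ≤ l)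
    (hc : N * c = ∑ i, ∑ j, a i j) (VA : ℝ) (hV : N * VA = ∑ i, ∑ j, a i j ^ 2) (hVp : 0 < VA) :
    ∑ σ : Equiv.Perm (Fin N), ((∑ i, a i (σ i)) - c) * Real.exp (l * ((∑ i, a i (σ i)) - c))
      ≤ 8 * l * Real.exp (4 * l) * VA *
        ∑ σ : Equiv.Perm (Fin N), Real.exp (l * ((∑ i, a i (σ i)) - c)) := by
  have hg := hs_g a hN ha c l hl
  have hNr : (0 : ℝ) < N := by exact_mod_cast hN
  set h : Equiv.Perm (Fin N) → ℝ := fun σ => (∑ i, a i (σ i)) - c with hh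
  set H := ∑ σ : Equiv.Perm (Fin N), Real.exp (l * h σ) with hH
  have hHpos : 0 ≤ H := Finset.sum_nonneg fun σ _ => (Real.exp_pos _).le
  have hd : ∀ σ i j, h σ - h (σ * Equiv.swap i j)
      = a i (σ i) + a j (σ j) - a i (σ j) - a j (σ i) := by
    intro σ i j
    rw [← hs_diff]; simp only [hh]; ring
  have hdr : ∀ σ, 2 * N * h σ = ∑ i, ∑ j, (h σ - h (σ * Equiv.swap i j)) := by
    intro σ
    simp only [hd, hs_drift, ← hc]; simp only [hh]; ring
  -- pairwise estimate
  have hpair : ∀ i j, ∑ σ, (h σ - h (σ * Equiv.swap i j)) * Real.exp (l * h σ)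
      ≤ ∑ σ, l * (h σ - h (σ * Equiv.swap i j)) ^ 2 * Real.exp (l * h σ) := by
    intro i j
    have e1 := hs_reindex i j (fun σ => (h σ - h (σ * Equiv.swap i j)) * Real.exp (l * h σ))
    have e2 := hs_reindex i j
      (fun σ => l * (h σ - h (σ * Equiv.swap i j)) ^ 2 * Real.exp (l * h σ))
    simp only [mul_assoc, Equiv.swap_mul_self, mul_one] at e1 e2
    have e3 : ∑ σ, (h σ - h (σ * Equiv.swap i j)) *
          (Real.exp (l * h σ) - Real.exp (l * h (σ * Equiv.swap i j)))
        ≤ ∑ σ, l * (h σ - h (σ * Equiv.swap i j)) ^ 2 *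
          (Real.exp (l * h σ) + Real.exp (l * h (σ * Equiv.swap i j))) :=
      Finset.sum_le_sum fun σ _ => hs_exp_aux l _ _ hl
    have e4 : ∑ σ, (h σ - h (σ * Equiv.swap i j)) *
          (Real.exp (l * h σ) - Real.exp (l * h (σ * Equiv.swap i j)))
        = ∑ σ, (h σ - h (σ * Equiv.swap i j)) * Real.exp (l * h σ)
          + ∑ σ, (h (σ * Equiv.swap i j) - h σ) * Real.exp (l * h (σ * Equiv.swap i j)) := by
      rw [← Finset.sum_add_distrib]
      exact Finset.sum_congr rfl fun σ _ => by ring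
    have e5 : ∑ σ, l * (h σ - h (σ * Equiv.swap i j)) ^ 2 *
          (Real.exp (l * h σ) + Real.exp (l * h (σ * Equiv.swap i j)))
        = ∑ σ, l * ((h σ - h (σ * Equiv.swap i j)) ^ 2 * Real.exp (l * h σ))
          + ∑ σ, l * ((h (σ * Equiv.swap i j) - h σ) ^ 2
            * Real.exp (l * h (σ * Equiv.swap i j))) := by
      rw [← Finset.sum_add_distrib]
      exact Finset.sum_congr rfl fun σ _ => by ring
    rw [e4, e5, e1, e2] at e3
    simp only [mul_assoc] at e3 ⊢
    linarith
  have hsq : ∀ σ, ∑ i, ∑ j, (h σ - h (σ * Equiv.swap i j)) ^ 2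
      ≤ 8 * N * (∑ i, a i (σ i) ^ 2 + VA) := by
    intro σ
    calc ∑ i, ∑ j, (h σ - h (σ * Equiv.swap i j)) ^ 2
        ≤ ∑ i, ∑ j, 4 * (a i (σ i) ^ 2 + a j (σ j) ^ 2 + a i (σ j) ^ 2 + a j (σ i) ^ 2) := by
          refine Finset.sum_le_sum fun i _ => Finset.sum_le_sum fun j _ => ?_
          rw [hd]
          nlinarith [sq_nonneg (a i (σ i) - a j (σ j)), sq_nonneg (a i (σ i) + a i (σ j)),
            sq_nonneg (a i (σ i) + a j (σ i)), sq_nonneg (a j (σ j) + a i (σ j)),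
            sq_nonneg (a j (σ j) + a j (σ i)), sq_nonneg (a i (σ j) - a j (σ i))]
      _ = 8 * N * (∑ i, a i (σ i) ^ 2 + VA) := by
          simp only [← Finset.mul_sum]
          rw [hs_sum4 (fun i j => a i j ^ 2) σ, ← hV]
          ring
  have key : 2 * N * ∑ σ, h σ * Real.exp (l * h σ)
      ≤ 8 * l * (N * (∑ σ : Equiv.Perm (Fin N), (∑ i, a i (σ i) ^ 2) * Real.exp (l * h σ))
        + N * VA * H) := by
    calc 2 * N * ∑ σ, h σ * Real.exp (l * h σ)
        = ∑ σ, ∑ i, ∑ j, (h σ - h (σ * Equiv.swap i j)) * Real.exp (l * h σ) := by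
          rw [Finset.mul_sum]
          refine Finset.sum_congr rfl fun σ _ => ?_
          rw [← mul_assoc, hdr]
          simp only [Finset.sum_mul]
      _ = ∑ i, ∑ j, ∑ σ, (h σ - h (σ * Equiv.swap i j)) * Real.exp (l * h σ) := by
          rw [Finset.sum_comm]
          exact Finset.sum_congr rfl fun i _ => Finset.sum_comm
      _ ≤ ∑ i, ∑ j, ∑ σ, l * (h σ - h (σ * Equiv.swap i j)) ^ 2 * Real.exp (l * h σ) :=
          Finset.sum_le_sum fun i _ => Finset.sum_le_sum fun j _ => hpair i j
      _ = ∑ σ, ∑ i, ∑ j, l * (h σ - h (σ * Equiv.swap i j)) ^ 2 * Real.exp (l * h σ) := by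
          symm
          rw [Finset.sum_comm]
          exact Finset.sum_congr rfl fun i _ => Finset.sum_comm
      _ = ∑ σ, l * (∑ i, ∑ j, (h σ - h (σ * Equiv.swap i j)) ^ 2) * Real.exp (l * h σ) := by
          refine Finset.sum_congr rfl fun σ _ => ?_
          simp only [Finset.sum_mul, Finset.mul_sum]
      _ ≤ ∑ σ, l * (8 * N * (∑ i, a i (σ i) ^ 2 + VA)) * Real.exp (l * h σ) := by
          refine Finset.sum_le_sum fun σ _ => ?_
          have := hsq σ
          gcongr
      _ = _ := by
          rw [hH]
          rw [Finset.mul_sum Finset.univ, Finset.mul_sum Finset.univ, ← Finset.sum_add_distrib,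
            Finset.mul_sum Finset.univ]
          refine Finset.sum_congr rfl fun σ _ => ?_
          ring
  rw [← hV] at hg
  have h1 : 1 ≤ Real.exp (4 * l) := Real.one_le_exp (by positivity)
  have h2 : N * VA * H ≤ Real.exp (4 * l) * (N * VA) * H := by
    have : 0 ≤ N * VA * H := by positivity
    nlinarith
  have h3 := mul_le_mul_of_nonneg_left (add_le_add hg h2) (by positivity : 0 ≤ 8 * l)
  have h4 := key.trans h3
  have h5 : 2 * N * ∑ σ, h σ * Real.exp (l * h σ)
      ≤ 2 * N * (8 * l * Real.exp (4 * l) * VA * H) := by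
    refine h4.trans (le_of_eq ?_); ring
  exact le_of_mul_le_mul_left h5 (by positivity)

lemma hs_mgf (hN : 0 < N) (ha : ∀ i j, a i j ∈ Set.Icc (-1 : ℝ) 1) (c : ℝ)
    (hc : N * c = ∑ i, ∑ j, a i j) (VA : ℝ) (hV : N * VA = ∑ i, ∑ j, a i j ^ 2) (hVp : 0 < VA)
    (l : ℝ) (hl : 0 ≤ l) :
    ∑ σ : Equiv.Perm (Fin N), Real.exp (l * ((∑ i, a i (σ i)) - c))
      ≤ Nat.factorial N * Real.exp (54 * VA * l ^ 2 * Real.exp (4 * l)) := by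
  set h : Equiv.Perm (Fin N) → ℝ := fun σ => (∑ i, a i (σ i)) - c with hh
  let H : ℝ → ℝ := fun x => ∑ σ : Equiv.Perm (Fin N), Real.exp (x * h σ)
  let q : ℝ → ℝ := fun x => 54 * VA * x ^ 2 * Real.exp (4 * x)
  have hHd : ∀ x, HasDerivAt H (∑ σ, h σ * Real.exp (x * h σ)) x := by
    intro x
    apply HasDerivAt.fun_sum
    intro σ _
    have := ((hasDerivAt_id x).mul_const (h σ)).exp
    simpa [mul_comm] using this
  have hqd : ∀ x, HasDerivAt q (54 * VA * (2 * x + 4 * x ^ 2) * Real.exp (4 * x)) x := by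
    intro x
    have e1 := ((hasDerivAt_id x).const_mul 4).exp
    have e2 := (hasDerivAt_pow 2 x).const_mul (54 * VA)
    have := e2.mul e1
    refine this.congr_deriv ?_
    simp
    ring
  have hGd : ∀ x, HasDerivAt (fun x => H x * Real.exp (-q x))
      ((∑ σ, h σ * Real.exp (x * h σ)) * Real.exp (-q x) + H x * (Real.exp (-q x) *
        -(54 * VA * (2 * x + 4 * x ^ 2) * Real.exp (4 * x)))) x := fun x =>
    (hHd x).mul (hqd x).neg.exp
  have hanti : AntitoneOn (fun x => H x * Real.exp (-q x)) (Set.Ici 0) := by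
    apply antitoneOn_of_deriv_nonpos (convex_Ici 0)
    · exact fun x _ => (hGd x).continuousAt.continuousWithinAt
    · exact fun x _ => (hGd x).differentiableAt.differentiableWithinAt
    · intro x hx
      rw [interior_Ici] at hx
      have hx : 0 < x := hx
      rw [(hGd x).deriv]
      have hH0 : 0 ≤ H x := Finset.sum_nonneg fun σ _ => (Real.exp_pos _).le
      have hd : ∑ σ, h σ * Real.exp (x * h σ) ≤ 8 * x * Real.exp (4 * x) * VA * H x :=
        hs_deriv a hN ha c x hx.le hc VA hV hVp
      have h3 : 0 ≤ (100 * x + 216 * x ^ 2) * Real.exp (4 * x) * VA * H x := by positivity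
      have h4 : ∑ σ, h σ * Real.exp (x * h σ)
          - H x * (54 * VA * (2 * x + 4 * x ^ 2) * Real.exp (4 * x)) ≤ 0 := by
        nlinarith
      have h5 := mul_nonpos_of_nonpos_of_nonneg h4 (Real.exp_pos (-q x)).le
      linarith
  have hfin := hanti (Set.mem_Ici.2 le_rfl) (Set.mem_Ici.2 hl) hl
  have hH0 : H 0 = Nat.factorial N := by
    simp [H, Fintype.card_perm]
  have hq0 : q 0 = 0 := by simp [q]
  simp only [hH0, hq0, neg_zero, Real.exp_zero, mul_one, Real.exp_neg] at hfin
  rwa [← div_eq_mul_inv, div_le_iff₀ (Real.exp_pos _)] at hfin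

lemma hs_opt (VA t : ℝ) (hV : 0 < VA) (ht : 0 < t) :
    let l := Real.log (1 + t / (54 * VA)) / 6
    54 * VA * l ^ 2 * Real.exp (4 * l) - l * t ≤ -(t / 12) * Real.log (1 + t / (54 * VA)) := by
  intro l
  obtain ⟨u, hu⟩ : ∃ u, u = t / (54 * VA) := ⟨_, rfl⟩
  have hu0 : 0 < u := by rw [hu]; positivity
  have htu : t = 54 * VA * u := by rw [hu]; field_simp
  have hL : Real.log (1 + t / (54 * VA)) = 6 * l := by simp only [l]; ring
  have hl0 : 0 ≤ l := by
    have : 0 ≤ Real.log (1 + t / (54 * VA)) := Real.log_nonneg (by rw [← hu]; linarith)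
    linarith
  have hexp : Real.exp (6 * l) = 1 + u := by
    rw [← hL, ← hu, Real.exp_log (by linarith)]
  set w := Real.exp (2 * l) with hw
  have hw4 : Real.exp (4 * l) = w ^ 2 := by
    rw [hw, ← Real.exp_nat_mul]; congr 1; push_cast; ring
  have hw6 : w ^ 3 = 1 + u := by
    rw [← hexp, hw, ← Real.exp_nat_mul]; congr 1; push_cast; ring
  have hw1 : 2 * l + 1 ≤ w := Real.add_one_le_exp _
  have hk : 2 * l * w ^ 2 ≤ u := by nlinarith [sq_nonneg w]
  rw [hL, hw4, htu]
  have : 54 * VA * l * (2 * l * w ^ 2) ≤ 54 * VA * l * u := by gcongr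
  nlinarith

end helpers

/-- Bennett-type MGF and tail bounds for a Hoeffding permutation statistic
with entries in `[-1,1]`. -/
theorem hoeffding_statistic_bennett (N : ℕ)
    (a : Fin N → Fin N → ℝ)
    (ha : ∀ i j, a i j ∈ Set.Icc (-1 : ℝ) 1)
    (VA : ℝ) (hVA : VA = (∑ i, ∑ j, (a i j) ^ 2) / (N : ℝ))
    (hVApos : 0 < VA) :
    (∀ lam : ℝ, 0 ≤ lam →
      permExp N (fun σ => Real.exp (lam *
          ((∑ i, a i (σ i)) - permExp N (fun σ' => ∑ i, a i (σ' i)))))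
        ≤ Real.exp (54 * VA * lam ^ 2 * Real.exp (4 * lam)))
    ∧ (∀ t : ℝ, 0 < t →
      permProb N (fun σ =>
          (∑ i, a i (σ i)) - permExp N (fun σ' => ∑ i, a i (σ' i)) ≥ t)
        ≤ Real.exp (-(t / 12) * Real.log (1 + t / (54 * VA)))) := by
  have hN : 0 < N := by
    rcases Nat.eq_zero_or_pos N with h | h
    · subst h; simp at hVA; linarith
    · exact h
  have hNr : (N : ℝ) ≠ 0 := by exact_mod_cast hN.ne'
  have hV : N * VA = ∑ i, ∑ j, a i j ^ 2 := by rw [hVA]; field_simp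
  have hc := hs_mean hN a
  set c := permExp N (fun σ' => ∑ i, a i (σ' i)) with hcdef
  have hF : (0 : ℝ) < Nat.factorial N := by positivity
  have hm := hs_mgf a hN ha c hc VA hV hVApos
  refine ⟨?_, ?_⟩
  · intro l hl
    unfold permExp
    rw [div_le_iff₀ hF, mul_comm]
    exact hm l hl
  · intro t ht
    have ho := hs_opt VA t hVApos ht
    set l := Real.log (1 + t / (54 * VA)) / 6 with hl
    simp only at ho
    have hl0 : 0 ≤ l := by
      have : 0 ≤ t / (54 * VA) := by positivity
      have : 0 ≤ Real.log (1 + t / (54 * VA)) := Real.log_nonneg (by linarith)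
      positivity
    refine le_trans ?_ (Real.exp_le_exp.2 ho)
    unfold permProb
    rw [div_le_iff₀ hF, Real.exp_sub, div_mul_eq_mul_div, le_div_iff₀ (Real.exp_pos _)]
    refine le_trans ?_ ((hm l hl0).trans (le_of_eq (mul_comm _ _)))
    rw [← nsmul_eq_mul, ← Finset.sum_const]
    refine le_trans (Finset.sum_le_sum (fun σ hσ => ?_))
      (Finset.sum_le_sum_of_subset_of_nonneg (Finset.filter_subset _ _)
        (fun σ _ _ => (Real.exp_pos _).le))
    have := (Finset.mem_filter.1 hσ).2
    exact Real.exp_le_exp.2 (mul_le_mul_of_nonneg_left this hl0)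
end

section
/- Let N, M be positive integers, let π be uniformly distributed on S_N and τ uniformly distributed on S_M, independent of each other. Let A = [a_{ij}], C = [c_{ij}] ∈ R^{N×M} be fixed matrices, with C doubly centered, and define the generalized combinatorial bilinear form Q_BF := Σ_{i∈[N], j∈[M]} c_{ij} a_{π(i)τ(j)} (note a_{π(i)τ(j)} is well-defined since π(i) ∈ [N] and τ(j) ∈ [M]). Define ν_rect := max over i,k ∈ [N] and σ, σ̃ ∈ S_M of | Σ_{j=1}^M c_{iσ(j)} a_{kσ̃(j)} |, assumed positive. Then (i) for every λ ≥ 0: E[ exp( λ ( Q_BF − E[Q_BF] ) / ν_rect ) ] ≤ exp( (54 / (N ν_rect²)) ‖C‖_op² ‖A‖_F² λ² e^{4λ} ); and (ii) for every t ≥ 0: P( Q_BF − E[Q_BF] ≥ t ) ≤ exp( − ( t / (12 ν_rect) ) · log( 1 + ν_rect t / ( (54/N) ‖C‖_op² ‖A‖_F² ) ) ). -/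
open scoped BigOperators Classical

/-- Operator (spectral) norm of a rectangular real matrix. -/
noncomputable def opNorm {m n : ℕ} (M : Matrix (Fin m) (Fin n) ℝ) : ℝ :=
  ‖LinearMap.toContinuousLinearMap (Matrix.toEuclideanLin M)‖

/-- Frobenius norm of a real matrix. -/
noncomputable def frobNorm {m n : ℕ} (M : Matrix (Fin m) (Fin n) ℝ) : ℝ :=
  Real.sqrt (∑ i, ∑ j, (M i j) ^ 2)

/-- Expectation of `f` under independent uniform permutations of `S_N` and `S_M`. -/
noncomputable def permExp2 (N M : ℕ)
    (f : Equiv.Perm (Fin N) → Equiv.Perm (Fin M) → ℝ) : ℝ :=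
  (∑ σ : Equiv.Perm (Fin N), ∑ τ : Equiv.Perm (Fin M), f σ τ) /
    ((Nat.factorial N : ℝ) * (Nat.factorial M : ℝ))

/-- Probability of an event under independent uniform permutations of `S_N`
and `S_M`. -/
noncomputable def permProb2 (N M : ℕ)
    (p : Equiv.Perm (Fin N) → Equiv.Perm (Fin M) → Prop) : ℝ :=
  ((Finset.univ.filter
      (fun q : Equiv.Perm (Fin N) × Equiv.Perm (Fin M) => p q.1 q.2)).card : ℝ) /
    ((Nat.factorial N : ℝ) * (Nat.factorial M : ℝ))

open Finset in
lemma aux_swap {n : ℕ} (D : Fin n → Fin n → ℝ) (σ : Equiv.Perm (Fin n)) (I J : Fin n) :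
    ∑ i, D i ((σ * Equiv.swap I J) i) =
      ∑ i, D i (σ i) - D I (σ I) - D J (σ J) + D I (σ J) + D J (σ I) := by
  by_cases h : I = J
  · subst h
    simp
  · have key : ∑ i, (D i ((σ * Equiv.swap I J) i) - D i (σ i)) =
        ∑ i ∈ ({I, J} : Finset (Fin n)), (D i ((σ * Equiv.swap I J) i) - D i (σ i)) := by
      symm
      apply Finset.sum_subset (Finset.subset_univ _)
      intro x _ hx
      simp only [Finset.mem_insert, Finset.mem_singleton, not_or] at hx
      simp [Equiv.swap_apply_of_ne_of_ne hx.1 hx.2]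
    rw [Finset.sum_pair h, Finset.sum_sub_distrib] at key
    simp only [Equiv.Perm.mul_apply, Equiv.swap_apply_left, Equiv.swap_apply_right] at key ⊢
    linarith

lemma aux_exp (x y : ℝ) :
    (x - y) * (Real.exp x - Real.exp y) ≤ (x - y) ^ 2 * (Real.exp x + Real.exp y) := by
  have key : ∀ a b : ℝ, Real.exp a - Real.exp b ≤ (a - b) * Real.exp a := by
    intro a b
    have h1 := Real.add_one_le_exp (b - a)
    have h2 : Real.exp b = Real.exp (b - a) * Real.exp a := by
      rw [← Real.exp_add]; congr 1; ring
    nlinarith [Real.exp_pos a]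
  have hx := Real.exp_pos x
  have hy := Real.exp_pos y
  rcases le_total y x with h | h
  · have := mul_le_mul_of_nonneg_left (key x y) (sub_nonneg.2 h)
    nlinarith [mul_nonneg (sq_nonneg (x - y)) hy.le]
  · have := mul_le_mul_of_nonneg_left (key y x) (sub_nonneg.2 h)
    nlinarith [mul_nonneg (sq_nonneg (x - y)) hx.le]

lemma aux_exp' (θ x y : ℝ) (hθ : 0 ≤ θ) :
    (x - y) * (Real.exp (θ * x) - Real.exp (θ * y)) ≤
      θ * ((x - y) ^ 2 * (Real.exp (θ * x) + Real.exp (θ * y))) := by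
  rcases hθ.eq_or_lt with rfl | h
  · simp
  · have := aux_exp (θ * x) (θ * y)
    refine le_of_mul_le_mul_left ?_ h
    linarith

lemma aux_sum_swap {n : ℕ} (f : Equiv.Perm (Fin n) → ℝ) (I J : Fin n) :
    ∑ σ, f (σ * Equiv.swap I J) = ∑ σ, f σ :=
  Equiv.sum_comp (Equiv.mulRight (Equiv.swap I J)) f

/-- tilted probability bound -/
lemma aux_tilt {n : ℕ} (D : Fin n → Fin n → ℝ) (hD : ∀ i k, |D i k| ≤ 1) (θ : ℝ) (hθ : 0 ≤ θ)
    (i k : Fin n) :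
    (n : ℝ) * ∑ σ : Equiv.Perm (Fin n),
        (if σ i = k then Real.exp (θ * ∑ l, D l (σ l)) else 0) ≤
      Real.exp (4 * θ) * ∑ σ : Equiv.Perm (Fin n), Real.exp (θ * ∑ l, D l (σ l)) := by
  have h1 : ∀ j : Fin n, ∑ σ : Equiv.Perm (Fin n),
        (if σ i = k then Real.exp (θ * ∑ l, D l (σ l)) else 0) ≤
      Real.exp (4 * θ) * ∑ σ : Equiv.Perm (Fin n),
        (if σ j = k then Real.exp (θ * ∑ l, D l (σ l)) else 0) := by
    intro j
    rw [← aux_sum_swap (fun σ : Equiv.Perm (Fin n) =>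
      (if σ i = k then Real.exp (θ * ∑ l, D l (σ l)) else 0)) i j, Finset.mul_sum]
    apply Finset.sum_le_sum
    intro σ _
    have e1 : (σ * Equiv.swap i j) i = σ j := by simp
    simp only [e1]
    split_ifs with h
    · rw [← Real.exp_add, aux_swap]
      apply Real.exp_le_exp.2
      have a1 := abs_le.1 (hD i (σ i))
      have a2 := abs_le.1 (hD j (σ j))
      have a3 := abs_le.1 (hD i (σ j))
      have a4 := abs_le.1 (hD j (σ i))
      rw [mul_comm 4 θ, ← mul_add]
      apply mul_le_mul_of_nonneg_left _ hθ
      linarith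
    · simp
  have h2 := Finset.sum_le_sum (fun j (_ : j ∈ Finset.univ) => h1 j)
  rw [Finset.sum_const, Finset.card_univ, Fintype.card_fin, nsmul_eq_mul, ← Finset.mul_sum,
    Finset.sum_comm] at h2
  have h3 : ∀ y : Equiv.Perm (Fin n),
      ∑ x, (if y x = k then Real.exp (θ * ∑ l, D l (y l)) else 0) =
        Real.exp (θ * ∑ l, D l (y l)) := by
    intro y
    rw [Equiv.sum_comp y (fun z => if z = k then Real.exp (θ * ∑ l, D l (y l)) else 0)]
    simp
  simp only [h3] at h2
  exact h2

lemma aux_deriv {n : ℕ} (hn : 0 < n) (D : Fin n → Fin n → ℝ) (hD : ∀ i k, |D i k| ≤ 1)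
    (h0 : ∑ i, ∑ k, D i k = 0) (θ : ℝ) (hθ : 0 ≤ θ) :
    ∑ σ : Equiv.Perm (Fin n), (∑ l, D l (σ l)) * Real.exp (θ * ∑ l, D l (σ l)) ≤
      8 / n * (∑ i, ∑ k, D i k ^ 2) * θ * Real.exp (4 * θ) *
        ∑ σ : Equiv.Perm (Fin n), Real.exp (θ * ∑ l, D l (σ l)) := by
  have hn' : (0 : ℝ) < n := by exact_mod_cast hn
  set S : Equiv.Perm (Fin n) → ℝ := fun σ => ∑ l, D l (σ l) with hS
  set F : ℝ := ∑ i, ∑ k, D i k ^ 2 with hF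
  have hF0 : 0 ≤ F := Finset.sum_nonneg fun i _ => Finset.sum_nonneg fun k _ => sq_nonneg _
  set m : ℝ := ∑ σ, Real.exp (θ * S σ) with hm
  have hm0 : 0 ≤ m := Finset.sum_nonneg fun σ _ => (Real.exp_pos _).le
  have hsw : ∀ σ I J, S σ - S (σ * Equiv.swap I J) =
      D I (σ I) + D J (σ J) - D I (σ J) - D J (σ I) := by
    intro σ I J
    simp only [hS]
    rw [aux_swap]; ring
  have hz : ∀ σ : Equiv.Perm (Fin n), ∑ I, ∑ J, D I (σ J) = 0 := by
    intro σ
    rw [← h0]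
    exact Finset.sum_congr rfl fun I _ => Equiv.sum_comp σ (D I)
  -- first moment
  have hfirst : ∀ σ, ∑ I, ∑ J, (S σ - S (σ * Equiv.swap I J)) = 2 * n * S σ := by
    intro σ
    simp only [hsw, Finset.sum_sub_distrib, Finset.sum_add_distrib, hz]
    rw [Finset.sum_comm (f := fun I J => D J (σ I)), hz]
    simp only [Finset.sum_const, Finset.card_univ, Fintype.card_fin, nsmul_eq_mul,
      ← Finset.mul_sum, hS]
    ring
  have hsecond : ∀ σ, ∑ I, ∑ J, (S σ - S (σ * Equiv.swap I J)) ^ 2 ≤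
      8 * n * (∑ i, D i (σ i) ^ 2) + 8 * F := by
    intro σ
    have hz2 : ∑ I, ∑ J, D I (σ J) ^ 2 = F :=
      Finset.sum_congr rfl fun I _ => Equiv.sum_comp σ (fun k => D I k ^ 2)
    have : ∑ I, ∑ J, (S σ - S (σ * Equiv.swap I J)) ^ 2 ≤ ∑ I, ∑ J,
        (4 * D I (σ I) ^ 2 + 4 * D J (σ J) ^ 2 + 4 * D I (σ J) ^ 2 + 4 * D J (σ I) ^ 2) := by
      refine Finset.sum_le_sum fun I _ => Finset.sum_le_sum fun J _ => ?_
      rw [hsw]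
      generalize D I (σ I) = a
      generalize D J (σ J) = b
      generalize D I (σ J) = c
      generalize D J (σ I) = d
      nlinarith [sq_nonneg (a - b), sq_nonneg (a + c), sq_nonneg (a + d), sq_nonneg (b + c),
        sq_nonneg (b + d), sq_nonneg (c - d)]
    refine this.trans (le_of_eq ?_)
    simp only [Finset.sum_add_distrib, ← Finset.mul_sum]
    rw [Finset.sum_comm (f := fun I J => D J (σ I) ^ 2), hz2]
    simp only [Finset.sum_const, Finset.card_univ, Fintype.card_fin, nsmul_eq_mul,
      ← Finset.mul_sum]
    ring
  -- pairwise
  have hpair : ∀ I J, ∑ σ, (S σ - S (σ * Equiv.swap I J)) * Real.exp (θ * S σ) ≤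
      θ * ∑ σ, (S σ - S (σ * Equiv.swap I J)) ^ 2 * Real.exp (θ * S σ) := by
    intro I J
    have hinv : ∀ σ : Equiv.Perm (Fin n), σ * Equiv.swap I J * Equiv.swap I J = σ := by
      intro σ; rw [mul_assoc, Equiv.swap_mul_self, mul_one]
    have e1 := aux_sum_swap
      (fun σ => (S σ - S (σ * Equiv.swap I J)) * Real.exp (θ * S σ)) I J
    have e2 := aux_sum_swap
      (fun σ => (S σ - S (σ * Equiv.swap I J)) ^ 2 * Real.exp (θ * S σ)) I J
    simp only [hinv] at e1 e2
    have h3 := Finset.sum_le_sum (fun σ (_ : σ ∈ (Finset.univ : Finset (Equiv.Perm (Fin n)))) =>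
      aux_exp' θ (S σ) (S (σ * Equiv.swap I J)) hθ)
    have l1 : ∑ σ, (S σ - S (σ * Equiv.swap I J)) *
        (Real.exp (θ * S σ) - Real.exp (θ * S (σ * Equiv.swap I J))) =
        ∑ σ, (S σ - S (σ * Equiv.swap I J)) * Real.exp (θ * S σ) +
        ∑ σ, (S (σ * Equiv.swap I J) - S σ) * Real.exp (θ * S (σ * Equiv.swap I J)) := by
      rw [← Finset.sum_add_distrib]
      exact Finset.sum_congr rfl fun σ _ => by ring
    have l2 : ∑ σ, θ * ((S σ - S (σ * Equiv.swap I J)) ^ 2 *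
        (Real.exp (θ * S σ) + Real.exp (θ * S (σ * Equiv.swap I J)))) =
        θ * (∑ σ, (S σ - S (σ * Equiv.swap I J)) ^ 2 * Real.exp (θ * S σ) +
        ∑ σ, (S (σ * Equiv.swap I J) - S σ) ^ 2 * Real.exp (θ * S (σ * Equiv.swap I J))) := by
      rw [← Finset.sum_add_distrib, Finset.mul_sum]
      exact Finset.sum_congr rfl fun σ _ => by ring
    rw [l1, l2, e1, e2] at h3
    linarith
  have hA : 2 * n * ∑ σ, S σ * Real.exp (θ * S σ) ≤
      θ * ∑ σ, (8 * n * (∑ i, D i (σ i) ^ 2) + 8 * F) * Real.exp (θ * S σ) := by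
    calc 2 * n * ∑ σ, S σ * Real.exp (θ * S σ)
        = ∑ σ, ∑ I, ∑ J, (S σ - S (σ * Equiv.swap I J)) * Real.exp (θ * S σ) := by
          rw [Finset.mul_sum]
          refine Finset.sum_congr rfl fun σ _ => ?_
          simp only [← Finset.sum_mul]
          rw [hfirst]; ring
      _ = ∑ I, ∑ J, ∑ σ, (S σ - S (σ * Equiv.swap I J)) * Real.exp (θ * S σ) := by
          rw [Finset.sum_comm]
          exact Finset.sum_congr rfl fun I _ => Finset.sum_comm
      _ ≤ ∑ I, ∑ J, θ * ∑ σ, (S σ - S (σ * Equiv.swap I J)) ^ 2 * Real.exp (θ * S σ) :=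
          Finset.sum_le_sum fun I _ => Finset.sum_le_sum fun J _ => hpair I J
      _ = θ * ∑ σ, (∑ I, ∑ J, (S σ - S (σ * Equiv.swap I J)) ^ 2) * Real.exp (θ * S σ) := by
          simp only [← Finset.mul_sum, Finset.sum_mul]
          congr 1
          rw [Finset.sum_comm (s := (Finset.univ : Finset (Equiv.Perm (Fin n))))]
          exact Finset.sum_congr rfl fun I _ => Finset.sum_comm
      _ ≤ _ := by
          refine mul_le_mul_of_nonneg_left (Finset.sum_le_sum fun σ _ => ?_) hθ
          exact mul_le_mul_of_nonneg_right (hsecond σ) (Real.exp_pos _).le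
  have hV : n * ∑ σ : Equiv.Perm (Fin n), (∑ i, D i (σ i) ^ 2) * Real.exp (θ * S σ) ≤
      F * (Real.exp (4 * θ) * m) := by
    have e : ∑ σ : Equiv.Perm (Fin n), (∑ i, D i (σ i) ^ 2) * Real.exp (θ * S σ) =
        ∑ i, ∑ k, D i k ^ 2 * ∑ σ : Equiv.Perm (Fin n),
          (if σ i = k then Real.exp (θ * S σ) else 0) := by
      simp only [Finset.sum_mul, Finset.mul_sum]
      rw [Finset.sum_comm]
      refine Finset.sum_congr rfl fun i _ => ?_
      rw [Finset.sum_comm]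
      refine Finset.sum_congr rfl fun σ _ => ?_
      simp
    rw [e, hF, Finset.mul_sum, Finset.sum_mul]
    refine Finset.sum_le_sum fun i _ => ?_
    rw [Finset.mul_sum, Finset.sum_mul]
    refine Finset.sum_le_sum fun k _ => ?_
    have := mul_le_mul_of_nonneg_left (aux_tilt D hD θ hθ i k) (sq_nonneg (D i k))
    simp only [hS, hm]
    linarith
  have hB : ∑ σ : Equiv.Perm (Fin n), (8 * n * (∑ i, D i (σ i) ^ 2) + 8 * F) * Real.exp (θ * S σ)
      = 8 * (n * ∑ σ : Equiv.Perm (Fin n), (∑ i, D i (σ i) ^ 2) * Real.exp (θ * S σ))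
        + 8 * F * m := by
    simp only [add_mul, Finset.sum_add_distrib, hm, Finset.mul_sum]
    congr 1
    exact Finset.sum_congr rfl fun σ _ => by simp only [Finset.sum_mul, Finset.mul_sum, mul_assoc]
  have he : 1 ≤ Real.exp (4 * θ) := Real.one_le_exp (by linarith)
  have hC : F * m ≤ F * (Real.exp (4 * θ) * m) := by
    apply mul_le_mul_of_nonneg_left _ hF0
    nlinarith
  have hfin : 2 * n * ∑ σ, S σ * Real.exp (θ * S σ) ≤ θ * (16 * (F * (Real.exp (4 * θ) * m))) := by
    refine hA.trans (mul_le_mul_of_nonneg_left ?_ hθ)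
    rw [hB]; linarith
  have : ∑ σ, S σ * Real.exp (θ * S σ) ≤ (θ * (16 * (F * (Real.exp (4 * θ) * m)))) / (2 * n) := by
    rw [le_div_iff₀ (by positivity)]; linarith
  refine this.trans (le_of_eq ?_)
  field_simp
  ring

lemma aux_mgf {n : ℕ} (hn : 0 < n) (D : Fin n → Fin n → ℝ) (hD : ∀ i k, |D i k| ≤ 1)
    (h0 : ∑ i, ∑ k, D i k = 0) (K : ℝ) (hK : 4 / n * (∑ i, ∑ k, D i k ^ 2) ≤ K)
    (θ : ℝ) (hθ : 0 ≤ θ) :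
    ∑ σ : Equiv.Perm (Fin n), Real.exp (θ * ∑ l, D l (σ l)) ≤
      n.factorial * Real.exp (K * θ ^ 2 * Real.exp (4 * θ)) := by
  set S : Equiv.Perm (Fin n) → ℝ := fun σ => ∑ l, D l (σ l) with hS
  set m : ℝ → ℝ := fun t => ∑ σ, Real.exp (t * S σ) with hm
  set g : ℝ → ℝ := fun t => Real.exp (-(K * t ^ 2 * Real.exp (4 * t))) with hg
  have hF0 : 0 ≤ ∑ i, ∑ k, D i k ^ 2 :=
    Finset.sum_nonneg fun i _ => Finset.sum_nonneg fun k _ => sq_nonneg _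
  have hK0 : 0 ≤ K := le_trans (by positivity) hK
  have hmd : ∀ t, HasDerivAt m (∑ σ, S σ * Real.exp (t * S σ)) t := by
    intro t
    have : ∀ σ ∈ (Finset.univ : Finset (Equiv.Perm (Fin n))),
        HasDerivAt (fun t => Real.exp (t * S σ)) (S σ * Real.exp (t * S σ)) t := by
      intro σ _
      have := ((hasDerivAt_id t).mul_const (S σ)).exp
      convert this using 1
      · rfl
      · rw [one_mul, mul_comm]; rfl
    exact HasDerivAt.fun_sum this
  have hgd : ∀ t, HasDerivAt g
      (g t * (-(K * (2 * t + 4 * t ^ 2) * Real.exp (4 * t)))) t := by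
    intro t
    have h1 : HasDerivAt (fun t : ℝ => Real.exp (4 * t)) (Real.exp (4 * t) * 4) t := by
      have := ((hasDerivAt_id t).const_mul (4 : ℝ)).exp
      simpa using this
    have h2 : HasDerivAt (fun t : ℝ => K * t ^ 2) (K * (2 * t)) t := by
      have := (hasDerivAt_pow 2 t).const_mul K
      simpa using this
    have := ((h2.mul h1).neg).exp
    convert this using 1
    · rfl
    · change g t * _ = g t * _
      ring
  have hd := fun t => (hmd t).mul (hgd t)
  have hanti : AntitoneOn (m * g) (Set.Ici 0) := by
    apply antitoneOn_of_deriv_nonpos (convex_Ici 0)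
    · exact fun t _ => (hd t).continuousAt.continuousWithinAt
    · exact fun t _ => (hd t).differentiableAt.differentiableWithinAt
    · intro t ht
      rw [interior_Ici] at ht
      have ht0 : 0 ≤ t := le_of_lt ht
      rw [(hd t).deriv]
      have hgp : 0 < g t := Real.exp_pos _
      have hmp : 0 ≤ m t := Finset.sum_nonneg fun σ _ => (Real.exp_pos _).le
      have h1 := aux_deriv hn D hD h0 t ht0
      have h2 : 8 / n * (∑ i, ∑ k, D i k ^ 2) * t * Real.exp (4 * t) * m t ≤
          K * (2 * t + 4 * t ^ 2) * Real.exp (4 * t) * m t := by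
        apply mul_le_mul_of_nonneg_right _ hmp
        apply mul_le_mul_of_nonneg_right _ (Real.exp_pos _).le
        have : 8 / n * (∑ i, ∑ k, D i k ^ 2) * t ≤ 2 * K * t := by
          apply mul_le_mul_of_nonneg_right _ ht0
          have : 8 / n * (∑ i, ∑ k, D i k ^ 2) = 2 * (4 / n * (∑ i, ∑ k, D i k ^ 2)) := by ring
          linarith
        nlinarith [mul_nonneg hK0 (sq_nonneg t)]
      have h3 : ∑ σ, S σ * Real.exp (t * S σ) ≤
          K * (2 * t + 4 * t ^ 2) * Real.exp (4 * t) * m t := h1.trans h2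
      have h4 := mul_le_mul_of_nonneg_left h3 hgp.le
      linarith
  have h := hanti (Set.mem_Ici.2 le_rfl) (Set.mem_Ici.2 hθ) hθ
  have hm0 : (m * g) 0 = n.factorial := by
    simp [hm, hg, Fintype.card_perm]
  rw [hm0] at h
  simp only [Pi.mul_apply, hg, Real.exp_neg] at h
  rw [← div_eq_mul_inv, div_le_iff₀ (Real.exp_pos _)] at h
  exact h

lemma aux_op {m n : ℕ} (C : Matrix (Fin m) (Fin n) ℝ) (v : Fin n → ℝ) :
    ∑ i, (∑ j, C i j * v j) ^ 2 ≤ opNorm C ^ 2 * ∑ j, v j ^ 2 := by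
  have h := (LinearMap.toContinuousLinearMap (Matrix.toEuclideanLin C)).le_opNorm (WithLp.toLp 2 v)
  have h2 := pow_le_pow_left₀ (norm_nonneg _) h 2
  rw [mul_pow, EuclideanSpace.real_norm_sq_eq, EuclideanSpace.real_norm_sq_eq] at h2
  simpa [opNorm, Matrix.mulVec, dotProduct, Matrix.toLpLin_apply] using h2

lemma aux_chernoff (x : ℝ) (hx : 0 ≤ x) :
    ((1 / 6) * Real.log (1 + x)) ^ 2 * Real.exp (4 * ((1 / 6) * Real.log (1 + x))) ≤
      x / 12 * Real.log (1 + x) := by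
  set L := Real.log (1 + x) with hL
  have hL0 : 0 ≤ L := Real.log_nonneg (by linarith)
  set w := Real.exp (L / 3) with hw
  have hw1 : 1 ≤ w := Real.one_le_exp (by positivity)
  have h3 : w ^ 3 = 1 + x := by
    rw [hw, ← Real.exp_nat_mul, ← Real.exp_log (show 0 < 1 + x by linarith)]
    congr 1; push_cast; ring
  have h2 : Real.exp (4 * ((1 / 6) * L)) = w ^ 2 := by
    rw [hw, ← Real.exp_nat_mul]
    congr 1; push_cast; ring
  have hl : L / 3 + 1 ≤ w := Real.add_one_le_exp _
  rw [h2]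
  have : L * w ^ 2 ≤ 3 * x := by
    have : L * w ^ 2 ≤ 3 * (w - 1) * w ^ 2 :=
      mul_le_mul_of_nonneg_right (by linarith) (sq_nonneg _)
    nlinarith
  nlinarith

/-- MGF and tail bounds for the generalized combinatorial bilinear form. -/
theorem combinatorial_bilinear_form_bennett
    (N M : ℕ) (hN : 0 < N) (hM : 0 < M)
    (A C : Matrix (Fin N) (Fin M) ℝ)
    (hrow : ∀ i, ∑ j, C i j = 0) (hcol : ∀ j, ∑ i, C i j = 0)
    (ν : ℝ)
    (hν : ν = Finset.univ.sup'
        ⟨(((⟨0, hN⟩ : Fin N), (⟨0, hN⟩ : Fin N)), (1, 1)), Finset.mem_univ _⟩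
        (fun p : (Fin N × Fin N) × Equiv.Perm (Fin M) × Equiv.Perm (Fin M) =>
          |∑ j : Fin M, C p.1.1 (p.2.1 j) * A p.1.2 (p.2.2 j)|))
    (hνpos : 0 < ν) :
    (∀ lam : ℝ, 0 ≤ lam →
      permExp2 N M (fun σ τ => Real.exp (lam *
          ((∑ i, ∑ j, C i j * A (σ i) (τ j))
            - permExp2 N M (fun σ' τ' => ∑ i, ∑ j, C i j * A (σ' i) (τ' j))) / ν))
        ≤ Real.exp ((54 / ((N : ℝ) * ν ^ 2)) * (opNorm C) ^ 2 * (frobNorm A) ^ 2 *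
            lam ^ 2 * Real.exp (4 * lam)))
    ∧ (∀ t : ℝ, 0 ≤ t →
      permProb2 N M (fun σ τ =>
          (∑ i, ∑ j, C i j * A (σ i) (τ j))
            - permExp2 N M (fun σ' τ' => ∑ i, ∑ j, C i j * A (σ' i) (τ' j)) ≥ t)
        ≤ Real.exp (-(t / (12 * ν)) *
            Real.log (1 + ν * t / ((54 / (N : ℝ)) * (opNorm C) ^ 2 * (frobNorm A) ^ 2)))) := by
  have hNR : (0 : ℝ) < N := by exact_mod_cast hN
  have hmean : ∀ τ : Equiv.Perm (Fin M), ∑ i, ∑ k, (∑ j, C i j * A k (τ j)) = 0 := by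
    intro τ
    rw [Finset.sum_comm]
    refine Finset.sum_eq_zero fun k _ => ?_
    rw [Finset.sum_comm]
    refine Finset.sum_eq_zero fun j _ => ?_
    rw [← Finset.sum_mul, hcol, zero_mul]
  have hE : permExp2 N M (fun σ' τ' => ∑ i, ∑ j, C i j * A (σ' i) (τ' j)) = 0 := by
    unfold permExp2
    rw [Finset.sum_comm]
    rw [Finset.sum_eq_zero, zero_div]
    intro τ _
    -- use invariance under the cyclic shift of all indices
    set S : Equiv.Perm (Fin N) → ℝ := fun σ => ∑ i, ∑ j, C i j * A (σ i) (τ j) with hS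
    have hsw : ∀ σ I J, S (σ * Equiv.swap I J) = S σ - (∑ j, C I j * A (σ I) (τ j))
        - (∑ j, C J j * A (σ J) (τ j)) + (∑ j, C I j * A (σ J) (τ j))
        + (∑ j, C J j * A (σ I) (τ j)) := fun σ I J =>
      aux_swap (fun i k => ∑ j, C i j * A k (τ j)) σ I J
    have hz : ∀ σ : Equiv.Perm (Fin N), ∑ I, ∑ J, (∑ j, C I j * A (σ J) (τ j)) = 0 := by
      intro σ
      rw [← hmean τ]
      exact Finset.sum_congr rfl fun I _ =>
        Equiv.sum_comp σ (fun k => ∑ j, C I j * A k (τ j))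
    have h1 : ∀ σ, ∑ I, ∑ J, (S σ - S (σ * Equiv.swap I J)) = 2 * N * S σ := by
      intro σ
      have : ∀ I J, S σ - S (σ * Equiv.swap I J) = (∑ j, C I j * A (σ I) (τ j))
        + (∑ j, C J j * A (σ J) (τ j)) - (∑ j, C I j * A (σ J) (τ j))
        - (∑ j, C J j * A (σ I) (τ j)) := by
        intro I J; rw [hsw]; ring
      simp only [this]
      rw [show (2 * N * S σ : ℝ) = N * S σ + N * S σ - 0 - 0 by ring]
      simp only [Finset.sum_sub_distrib, Finset.sum_add_distrib (ι := Fin N)]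
      rw [hz, Finset.sum_comm (f := fun I J => ∑ j, C J j * A (σ I) (τ j)), hz]
      simp only [Finset.sum_const, Finset.card_univ, Fintype.card_fin, nsmul_eq_mul,
        ← Finset.mul_sum, hS]
    have h2 : ∑ σ, ∑ I, ∑ J, (S σ - S (σ * Equiv.swap I J)) = 0 := by
      rw [Finset.sum_comm]
      refine Finset.sum_eq_zero fun I _ => ?_
      rw [Finset.sum_comm]
      refine Finset.sum_eq_zero fun J _ => ?_
      rw [Finset.sum_sub_distrib, aux_sum_swap, sub_self]
    simp only [h1, ← Finset.mul_sum] at h2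
    rcases mul_eq_zero.1 h2 with h | h
    · linarith
    · exact h
  have hbd : ∀ (τ : Equiv.Perm (Fin M)) i k, |(∑ j, C i j * A k (τ j)) / ν| ≤ 1 := by
    intro τ i k
    rw [abs_div, abs_of_pos hνpos, div_le_one hνpos]
    have := Finset.le_sup' (fun p : (Fin N × Fin N) × Equiv.Perm (Fin M) × Equiv.Perm (Fin M) =>
          |∑ j : Fin M, C p.1.1 (p.2.1 j) * A p.1.2 (p.2.2 j)|)
          (Finset.mem_univ ((i, k), (1, τ)))
    rw [hν]
    simpa using this
  have hfrob : frobNorm A ^ 2 = ∑ i, ∑ j, A i j ^ 2 := by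
    unfold frobNorm
    rw [Real.sq_sqrt]
    exact Finset.sum_nonneg fun i _ => Finset.sum_nonneg fun k _ => sq_nonneg _
  set K : ℝ := (54 / ((N : ℝ) * ν ^ 2)) * (opNorm C) ^ 2 * (frobNorm A) ^ 2 with hKdef
  have hK0 : 0 ≤ K := by positivity
  have hK : ∀ τ : Equiv.Perm (Fin M),
      4 / N * (∑ i, ∑ k, ((∑ j, C i j * A k (τ j)) / ν) ^ 2) ≤ K := by
    intro τ
    have h1 : ∑ i, ∑ k, (∑ j, C i j * A k (τ j)) ^ 2 ≤ opNorm C ^ 2 * frobNorm A ^ 2 := by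
      rw [Finset.sum_comm, hfrob, Finset.mul_sum]
      refine Finset.sum_le_sum fun k _ => ?_
      refine (aux_op C (fun j => A k (τ j))).trans (le_of_eq ?_)
      rw [Equiv.sum_comp τ (fun j => A k j ^ 2)]
    have h2 : ∑ i, ∑ k, ((∑ j, C i j * A k (τ j)) / ν) ^ 2 =
        (∑ i, ∑ k, (∑ j, C i j * A k (τ j)) ^ 2) / ν ^ 2 := by
      simp only [div_pow, ← Finset.sum_div]
    have h3 : 0 ≤ opNorm C ^ 2 * frobNorm A ^ 2 := by positivity
    rw [h2]
    calc 4 / N * ((∑ i, ∑ k, (∑ j, C i j * A k (τ j)) ^ 2) / ν ^ 2)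
        ≤ 54 / N * ((opNorm C ^ 2 * frobNorm A ^ 2) / ν ^ 2) := by gcongr; norm_num
      _ = K := by rw [hKdef]; field_simp
  have hmgf : ∀ lam : ℝ, 0 ≤ lam →
      permExp2 N M (fun σ τ => Real.exp (lam *
          ((∑ i, ∑ j, C i j * A (σ i) (τ j)) - 0) / ν))
        ≤ Real.exp (K * lam ^ 2 * Real.exp (4 * lam)) := by
    intro lam hlam
    unfold permExp2
    rw [div_le_iff₀ (by positivity), Finset.sum_comm]
    have h1 : ∀ τ ∈ (Finset.univ : Finset (Equiv.Perm (Fin M))),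
        ∑ σ : Equiv.Perm (Fin N), Real.exp (lam *
          ((∑ i, ∑ j, C i j * A (σ i) (τ j)) - 0) / ν) ≤
        N.factorial * Real.exp (K * lam ^ 2 * Real.exp (4 * lam)) := by
      intro τ _
      have := aux_mgf hN (fun i k => (∑ j, C i j * A k (τ j)) / ν) (hbd τ)
        (by simp only [← Finset.sum_div]; rw [hmean, zero_div]) K (hK τ) lam hlam
      refine le_trans (le_of_eq ?_) this
      refine Finset.sum_congr rfl fun σ _ => ?_
      rw [sub_zero, ← Finset.sum_div, mul_div_assoc]
    refine (Finset.sum_le_sum h1).trans (le_of_eq ?_)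
    rw [Finset.sum_const, Finset.card_univ, Fintype.card_perm, Fintype.card_fin, nsmul_eq_mul]
    ring
  rw [hE]
  refine ⟨hmgf, fun t ht => ?_⟩
  have hKν : (54 / (N : ℝ)) * (opNorm C) ^ 2 * (frobNorm A) ^ 2 = K * ν ^ 2 := by
    rw [hKdef]; field_simp
  rw [hKν]
  -- Markov
  have hmarkov : ∀ lam : ℝ, 0 ≤ lam → permProb2 N M (fun σ τ =>
      (∑ i, ∑ j, C i j * A (σ i) (τ j)) - 0 ≥ t) ≤
      Real.exp (-(lam * t / ν) + K * lam ^ 2 * Real.exp (4 * lam)) := by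
    intro lam hlam
    have h1 := hmgf lam hlam
    rw [Real.exp_add, Real.exp_neg, inv_mul_eq_div, le_div_iff₀ (Real.exp_pos _)]
    refine le_trans ?_ h1
    unfold permProb2 permExp2
    rw [div_mul_eq_mul_div]
    refine div_le_div_of_nonneg_right ?_ (by positivity)
    rw [← Fintype.sum_prod_type', ← nsmul_eq_mul, ← Finset.sum_const]
    refine le_trans (Finset.sum_le_sum ?_)
      (Finset.sum_le_sum_of_subset_of_nonneg (Finset.filter_subset _ _)
        fun _ _ _ => (Real.exp_pos _).le)
    intro q hq
    have hq' := (Finset.mem_filter.1 hq).2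
    apply Real.exp_le_exp.2
    gcongr
  rcases hK0.eq_or_lt with hK00 | hKpos
  · have := hmarkov 0 le_rfl
    rw [← hK00] at this ⊢
    simpa using this
  · set x : ℝ := ν * t / (K * ν ^ 2) with hx
    have hx0 : 0 ≤ x := by positivity
    have hL0 : 0 ≤ Real.log (1 + x) := Real.log_nonneg (by linarith)
    refine (hmarkov ((1 / 6) * Real.log (1 + x)) (by positivity)).trans ?_
    apply Real.exp_le_exp.2
    have h1 := mul_le_mul_of_nonneg_left (aux_chernoff x hx0) hKpos.le
    have h2 : t / ν = K * x := by rw [hx]; field_simp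
    have h3 : t / (12 * ν) = K * x / 12 := by rw [← h2]; field_simp
    rw [h3, mul_div_assoc, h2]
    linarith
end

section
/- There exists a universal constant K > 0 such that the following holds. Let N ≥ 20, let π be uniformly distributed on S_N, and define Chatterjee's rank correlation statistic under independence, ξ_N := 1 − (3/(N²−1)) Σ_{i=1}^{N−1} | π(i+1) − π(i) |. Then for every t > 0: P( ξ_N − E[ξ_N] ≥ t ) ≤ exp( − K N² t² / ( 1 + N t ) ) + exp( − K N t² / ( 1 + √N · t ) ). -/
open scoped BigOperators Classical

/-- Chatterjee's rank correlation under independence, as a function of a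
uniform random permutation. -/
noncomputable def chatterjeeXi (N : ℕ) (σ : Equiv.Perm (Fin N)) : ℝ :=
  1 - 3 / ((N : ℝ) ^ 2 - 1) *
    ∑ i : Fin (N - 1),
      |(((σ ⟨(i : ℕ) + 1, by have := i.isLt; omega⟩ : Fin N) : ℕ) : ℝ)
        - (((σ ⟨(i : ℕ), by have := i.isLt; omega⟩ : Fin N) : ℕ) : ℝ)|

lemma exp_chord (l d y : ℝ) (hd : 0 < d) (hy : |y| ≤ d) :
    Real.exp (l * y) ≤ Real.cosh (l * d) + y * (Real.sinh (l * d) / d) := by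
  obtain ⟨h1, h2⟩ := abs_le.mp hy
  have ha : 0 ≤ (d + y) / (2 * d) := div_nonneg (by linarith) (by linarith)
  have hb : 0 ≤ (d - y) / (2 * d) := div_nonneg (by linarith) (by linarith)
  have h := convexOn_exp.2 (Set.mem_univ (l * d)) (Set.mem_univ (-(l * d))) ha hb
    (by field_simp; ring)
  simp only [smul_eq_mul] at h
  have e1 : (d + y) / (2 * d) * (l * d) + (d - y) / (2 * d) * -(l * d) = l * y := by
    field_simp; ring
  rw [e1] at h
  refine h.trans (le_of_eq ?_)
  rw [Real.cosh_eq, Real.sinh_eq]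
  field_simp
  ring

lemma hoeff {ι : Type} [Fintype ι] (y : ι → ℝ) (d l : ℝ) (hd : 0 < d) (hy : ∀ i, |y i| ≤ d)
    (h0 : ∑ i, y i = 0) :
    ∑ i, Real.exp (l * y i) ≤ (Fintype.card ι : ℝ) * Real.exp ((l * d) ^ 2 / 2) := by
  calc ∑ i, Real.exp (l * y i)
      ≤ ∑ i, (Real.cosh (l * d) + y i * (Real.sinh (l * d) / d)) :=
        Finset.sum_le_sum fun i _ => exp_chord l d (y i) hd (hy i)
    _ = (Fintype.card ι : ℝ) * Real.cosh (l * d) := by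
        rw [Finset.sum_add_distrib, ← Finset.sum_mul, h0]; simp
    _ ≤ _ := by gcongr; exact Real.cosh_le_exp_half_sq _

lemma mgf_bound (n : ℕ) : ∀ (f : Equiv.Perm (Fin n) → ℝ) (c : ℝ), 0 < c →
    (∀ σ i j, |f (σ * Equiv.swap i j) - f σ| ≤ c) → ∀ l : ℝ,
    ∑ σ, Real.exp (l * (f σ - permExp n f)) ≤ (n.factorial : ℝ) * Real.exp (2 * n * (l * c) ^ 2) := by
  induction n with
  | zero =>
    intro f c hc hf l
    simp [permExp]
  | succ n ih =>
    intro f c hc hf l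
    have hleft : ∀ σ i j, |f (Equiv.swap i j * σ) - f σ| ≤ c := by
      intro σ i j
      rw [Equiv.swap_mul_eq_mul_swap]; exact hf _ _ _
    set F : Fin (n + 1) → Equiv.Perm (Fin n) → ℝ :=
      fun p e => f (Equiv.Perm.decomposeFin.symm (p, e)) with hF
    set m : Fin (n + 1) → ℝ := fun p => permExp n (F p) with hm
    set M := permExp (n + 1) f with hM
    have hfac : (0 : ℝ) < n.factorial := by positivity
    have hsum : ∀ g : Equiv.Perm (Fin (n + 1)) → ℝ,
        ∑ σ, g σ = ∑ p, ∑ e, g (Equiv.Perm.decomposeFin.symm (p, e)) := by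
      intro g
      rw [← Equiv.sum_comp Equiv.Perm.decomposeFin.symm g, Fintype.sum_prod_type]
    have hmM : ∑ p, m p = (n + 1) * M := by
      simp only [hm, hM, permExp]
      rw [hsum f, ← Finset.sum_div, Nat.factorial_succ]
      push_cast
      field_simp
      rfl
    have hdec : ∀ p e, Equiv.Perm.decomposeFin.symm (p, e)
        = Equiv.swap 0 p * Equiv.Perm.decomposeFin.symm ((0 : Fin (n+1)), e) := by
      intro p e
      ext x
      refine Fin.cases ?_ (fun i => ?_) x <;> simp
    have hext : ∀ (e : Equiv.Perm (Fin n)) i j,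
        Equiv.Perm.decomposeFin.symm ((0 : Fin (n+1)), e * Equiv.swap i j)
        = Equiv.Perm.decomposeFin.symm ((0 : Fin (n+1)), e) * Equiv.swap i.succ j.succ := by
      intro e i j
      ext x
      refine Fin.cases ?_ (fun k => ?_) x
      · rw [Equiv.Perm.mul_apply, Equiv.swap_apply_of_ne_of_ne (Fin.succ_ne_zero _).symm
          (Fin.succ_ne_zero _).symm]
        simp
      · have : Equiv.swap i.succ j.succ k.succ = (Equiv.swap i j k).succ := by
          simp only [Equiv.swap_apply_def, Fin.succ_inj]
          split_ifs <;> rfl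
        rw [Equiv.Perm.mul_apply, this]
        simp
    have hFlip : ∀ p e i j, |F p (e * Equiv.swap i j) - F p e| ≤ c := by
      intro p e i j
      simp only [hF]
      rw [hdec p, hdec p e, hext, ← mul_assoc]
      exact hf _ _ _
    have hm0 : ∀ p, |m p - m 0| ≤ c := by
      intro p
      simp only [hm, permExp]
      rw [← sub_div, ← Finset.sum_sub_distrib, abs_div, abs_of_pos hfac, div_le_iff₀ hfac]
      refine (Finset.abs_sum_le_sum_abs _ _).trans ?_
      calc _ ≤ ∑ e : Equiv.Perm (Fin n), c := by
            refine Finset.sum_le_sum fun e _ => ?_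
            simp only [hF]
            rw [hdec p e]
            exact hleft _ _ _
        _ = c * n.factorial := by
            simp [Fintype.card_perm, mul_comm]
    have hmd : ∀ p, |m p - M| ≤ 2 * c := by
      have h1 : |m 0 - M| ≤ c := by
        have : (n + 1 : ℝ) * (M - m 0) = ∑ p, (m p - m 0) := by
          rw [Finset.sum_sub_distrib, hmM]; simp; ring
        have h2 : |(n + 1 : ℝ) * (M - m 0)| ≤ (n + 1) * c := by
          rw [this]
          refine (Finset.abs_sum_le_sum_abs _ _).trans ?_
          refine (Finset.sum_le_sum fun p _ => hm0 p).trans ?_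
          simp
        have h3 : (0 : ℝ) < n + 1 := by positivity
        rw [abs_mul, abs_of_pos h3] at h2
        rw [abs_sub_comm]
        exact le_of_mul_le_mul_left h2 h3
      intro p
      have := abs_add_le (m p - m 0) (m 0 - M)
      rw [sub_add_sub_cancel] at this
      linarith [hm0 p]
    have hH := hoeff (fun p => m p - M) (2 * c) l (by linarith) hmd
      (by rw [Finset.sum_sub_distrib, hmM]; simp)
    rw [hsum]
    calc _ = ∑ p, Real.exp (l * (m p - M)) * ∑ e, Real.exp (l * (F p e - m p)) := by
          refine Finset.sum_congr rfl fun p _ => ?_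
          rw [Finset.mul_sum]
          refine Finset.sum_congr rfl fun e _ => ?_
          rw [← Real.exp_add]
          congr 1
          simp only [hF]
          ring
      _ ≤ ∑ p, Real.exp (l * (m p - M)) *
            ((n.factorial : ℝ) * Real.exp (2 * n * (l * c) ^ 2)) := by
          refine Finset.sum_le_sum fun p _ => ?_
          gcongr
          exact ih (F p) c hc (hFlip p) l
      _ ≤ ((Fintype.card (Fin (n+1)) : ℝ) * Real.exp ((l * (2 * c)) ^ 2 / 2)) *
            ((n.factorial : ℝ) * Real.exp (2 * n * (l * c) ^ 2)) := by
          rw [← Finset.sum_mul]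
          gcongr
      _ = _ := by
          rw [Fintype.card_fin, Nat.factorial_succ]
          have : Real.exp (2 * ((n + 1 : ℕ) : ℝ) * (l * c) ^ 2)
            = Real.exp ((l * (2 * c)) ^ 2 / 2) * Real.exp (2 * n * (l * c) ^ 2) := by
            rw [← Real.exp_add]; congr 1; push_cast; ring
          rw [this]; push_cast; ring

lemma xi_lip (N : ℕ) (hN : 20 ≤ N) (σ : Equiv.Perm (Fin N)) (i j : Fin N) :
    |chatterjeeXi N (σ * Equiv.swap i j) - chatterjeeXi N σ| ≤ 12 / (N : ℝ) := by
  obtain ⟨n, rfl⟩ : ∃ n, N = n + 1 := ⟨N - 1, by omega⟩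
  set τ := σ * Equiv.swap i j with hτ
  set g : Equiv.Perm (Fin (n+1)) → Fin (n+1) → ℝ := fun s k => ((s k : ℕ) : ℝ) with hg
  have hn : (19 : ℝ) ≤ n := by
    have : 19 ≤ n := by omega
    exact_mod_cast this
  have hxi : ∀ s, chatterjeeXi (n+1) s
      = 1 - 3 / (((n + 1 : ℕ) : ℝ) ^ 2 - 1) * ∑ k : Fin n, |g s k.succ - g s k.castSucc| := by
    intro s; rfl
  have hb : ∀ a b : Fin (n+1), |((a : ℕ) : ℝ) - ((b : ℕ) : ℝ)| ≤ n := by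
    intro a b
    have ha : ((a : ℕ) : ℝ) ≤ n := by exact_mod_cast Nat.lt_succ_iff.mp a.isLt
    have hb : ((b : ℕ) : ℝ) ≤ n := by exact_mod_cast Nat.lt_succ_iff.mp b.isLt
    have ha0 : (0:ℝ) ≤ ((a : ℕ) : ℝ) := by positivity
    have hb0 : (0:ℝ) ≤ ((b : ℕ) : ℝ) := by positivity
    rw [abs_le]; constructor <;> linarith
  have hD : ∑ k, |g τ k - g σ k| ≤ 2 * n := by
    calc ∑ k, |g τ k - g σ k| ≤ ∑ k, ((if k = i then (n:ℝ) else 0) + (if k = j then (n:ℝ) else 0)) := by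
          refine Finset.sum_le_sum fun k _ => ?_
          have hn0 : (0:ℝ) ≤ n := by positivity
          by_cases h1 : k = i
          · rw [if_pos h1]
            have := hb (τ k) (σ k)
            have h2 : (0:ℝ) ≤ if k = j then (n:ℝ) else 0 := by split_ifs <;> simp
            simp only [hg]
            linarith
          · by_cases h2 : k = j
            · rw [if_neg h1, if_pos h2, zero_add]
              exact hb (τ k) (σ k)
            · simp [hg, hτ, Equiv.swap_apply_of_ne_of_ne h1 h2, h1, h2]
      _ = 2 * n := by
          rw [Finset.sum_add_distrib]; simp; ring
  have hS : |(∑ k : Fin n, |g τ k.succ - g τ k.castSucc|) - (∑ k : Fin n, |g σ k.succ - g σ k.castSucc|)|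
      ≤ 4 * n := by
    rw [← Finset.sum_sub_distrib]
    refine (Finset.abs_sum_le_sum_abs _ _).trans ?_
    calc _ ≤ ∑ k : Fin n, (|g τ k.succ - g σ k.succ| + |g τ k.castSucc - g σ k.castSucc|) := by
          refine Finset.sum_le_sum fun k _ => ?_
          refine (abs_abs_sub_abs_le_abs_sub _ _).trans ?_
          have := abs_sub (g τ k.succ - g σ k.succ) (g τ k.castSucc - g σ k.castSucc)
          refine le_trans (le_of_eq ?_) this
          congr 1; ring
      _ ≤ 2 * n + 2 * n := by
          rw [Finset.sum_add_distrib]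
          have e1 := Fin.sum_univ_succ (fun k => |g τ k - g σ k|)
          have e2 := Fin.sum_univ_castSucc (fun k => |g τ k - g σ k|)
          have := abs_nonneg (g τ 0 - g σ 0)
          have := abs_nonneg (g τ (Fin.last n) - g σ (Fin.last n))
          linarith
      _ = _ := by ring
  rw [hxi, hxi]
  have hp : (0:ℝ) < ((n + 1 : ℕ) : ℝ) ^ 2 - 1 := by push_cast; nlinarith
  rw [sub_sub_sub_cancel_left, ← mul_sub, abs_mul, abs_sub_comm, abs_of_pos (by positivity)]
  calc _ ≤ 3 / (((n + 1 : ℕ) : ℝ) ^ 2 - 1) * (4 * n) := by gcongr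
    _ ≤ _ := by
      rw [div_mul_eq_mul_div, div_le_div_iff₀ hp (by positivity)]
      push_cast
      nlinarith

/-- Concentration of Chatterjee's rank correlation under independence. -/
theorem chatterjee_tail :
    ∃ K : ℝ, 0 < K ∧
      ∀ (N : ℕ), 20 ≤ N →
      ∀ t : ℝ, 0 < t →
        permProb N (fun σ => chatterjeeXi N σ - permExp N (chatterjeeXi N) ≥ t)
          ≤ Real.exp (-(K * (N : ℝ) ^ 2 * t ^ 2 / (1 + (N : ℝ) * t)))
            + Real.exp (-(K * (N : ℝ) * t ^ 2 / (1 + Real.sqrt (N : ℝ) * t))) := by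
  refine ⟨1 / 1152, by norm_num, fun N hN t ht => ?_⟩
  have hN0 : (0 : ℝ) < N := by
    have : 0 < N := by omega
    exact_mod_cast this
  have hfac : (0 : ℝ) < N.factorial := by positivity
  set l : ℝ := N * t / 576 with hl
  have hl0 : 0 < l := by positivity
  have hmgf := mgf_bound N (chatterjeeXi N) (12 / N) (by positivity) (xi_lip N hN) l
  have key : permProb N (fun σ => chatterjeeXi N σ - permExp N (chatterjeeXi N) ≥ t)
      ≤ Real.exp (-(1 / 1152 * N * t ^ 2)) := by
    unfold permProb
    rw [div_le_iff₀ hfac]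
    have h1 : ((Finset.univ.filter (fun σ => chatterjeeXi N σ - permExp N (chatterjeeXi N) ≥ t)).card : ℝ)
        * Real.exp (l * t) ≤ ∑ σ, Real.exp (l * (chatterjeeXi N σ - permExp N (chatterjeeXi N))) := by
      rw [← nsmul_eq_mul]
      refine (Finset.card_nsmul_le_sum _ _ _ ?_).trans
        (Finset.sum_le_sum_of_subset_of_nonneg (Finset.subset_univ _)
          fun _ _ _ => (Real.exp_pos _).le)
      intro σ hσ
      have := (Finset.mem_filter.mp hσ).2
      gcongr
    have h2 := h1.trans hmgf
    have h3 : Real.exp (2 * N * (l * (12 / N)) ^ 2)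
        = Real.exp (-(1 / 1152 * N * t ^ 2)) * Real.exp (l * t) := by
      rw [← Real.exp_add]; congr 1
      rw [hl]; field_simp; ring
    rw [h3, ← mul_assoc] at h2
    have h4 := le_of_mul_le_mul_right h2 (Real.exp_pos _)
    linarith
  refine key.trans ?_
  have h5 : Real.exp (-(1 / 1152 * N * t ^ 2))
      ≤ Real.exp (-(1 / 1152 * (N : ℝ) * t ^ 2 / (1 + Real.sqrt (N : ℝ) * t))) := by
    apply Real.exp_le_exp.mpr
    apply neg_le_neg
    apply div_le_self (by positivity)
    have : 0 ≤ Real.sqrt (N : ℝ) * t := by positivity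
    linarith
  linarith [Real.exp_pos (-(1 / 1152 * (N : ℝ) ^ 2 * t ^ 2 / (1 + (N : ℝ) * t)))]
end

section
/- There exists a universal constant K > 0 such that the following holds. Let m, n be positive integers with N := m + n ≥ 20, let z_1,...,z_N be pairwise distinct real numbers, and let π be uniformly distributed on S_N. Define c_{ij} := 1(i ≤ m and j > m), a_{kℓ} := 1(z_k < z_ℓ), and Q_U := Σ_{i,j∈[N]} c_{ij} a_{π(i)π(j)} (the permuted Mann–Whitney–Wilcoxon statistic). Then for every t > 0: P( Q_U − E[Q_U] > t ) ≤ exp( − K t² / ( N m n + N t ) ) + exp( − K t² / ( m² n² / N² + (m n)^{1/2} t ) ). -/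
open scoped BigOperators Classical

namespace MWW

lemma exp_bound (y : ℝ) (h : y ≤ 1) : Real.exp y ≤ 1 + y + y ^ 2 := by
  by_cases h1 : -1 ≤ y
  · have := Real.abs_exp_sub_one_sub_id_le (x := y) (abs_le.2 ⟨h1, h⟩)
    have := (abs_le.1 this).2
    linarith
  · push Not at h1
    have : Real.exp y ≤ 1 := Real.exp_le_one_iff.2 (by linarith)
    nlinarith

lemma key (a b x : ℝ) (ha : 0 ≤ a) (hb : 0 ≤ b) (hab : a + b = 1) :
    a * Real.exp (-(b * x) - 2 * b * x ^ 2) + b * Real.exp (a * x - 2 * a * x ^ 2) ≤ 1 := by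
  have ha1 : a ≤ 1 := by linarith
  have hb1 : b ≤ 1 := by linarith
  by_cases hx : |x| ≤ 1 / 2
  · obtain ⟨h1, h2⟩ := abs_le.1 hx
    have e1 := exp_bound (-(b * x) - 2 * b * x ^ 2) (by
      have : -x - 2 * x ^ 2 ≤ 1 := by nlinarith
      nlinarith)
    have e2 := exp_bound (a * x - 2 * a * x ^ 2) (by
      have : x - 2 * x ^ 2 ≤ 1 := by nlinarith
      nlinarith)
    have q1 : (1 + 2 * x) ^ 2 ≤ 4 := by nlinarith
    have q2 : (1 - 2 * x) ^ 2 ≤ 4 := by nlinarith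
    have hc : 0 ≤ a * b * x ^ 2 := by positivity
    have r1 := mul_le_mul_of_nonneg_left q1 (mul_nonneg hc hb)
    have r2 := mul_le_mul_of_nonneg_left q2 (mul_nonneg hc ha)
    have f1 := mul_le_mul_of_nonneg_left e1 ha
    have f2 := mul_le_mul_of_nonneg_left e2 hb
    have hb' : b = 1 - a := by linarith
    subst hb'
    nlinarith
  · have hx' : |x| < 2 * x ^ 2 := by
      push Not at hx
      rw [← sq_abs x]; nlinarith
    have h3 := (neg_abs_le x)
    have h4 := (le_abs_self x)
    have e1 : Real.exp (-(b * x) - 2 * b * x ^ 2) ≤ 1 := Real.exp_le_one_iff.2 (by nlinarith)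
    have e2 : Real.exp (a * x - 2 * a * x ^ 2) ≤ 1 := Real.exp_le_one_iff.2 (by nlinarith)
    nlinarith

noncomputable def U {N : ℕ} (w : Fin N → Prop) : ℝ :=
  ∑ k, ∑ l, if k < l ∧ w k ∧ ¬ w l then (1 : ℝ) else 0
noncomputable def u {N : ℕ} (w : Fin N → Prop) : ℝ := ∑ k, if w k then (1 : ℝ) else 0
noncomputable def v {N : ℕ} (w : Fin N → Prop) : ℝ := ∑ k, if w k then (0 : ℝ) else 1

lemma u_nonneg {N : ℕ} (w : Fin N → Prop) : 0 ≤ u w :=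
  Finset.sum_nonneg (fun i _ => by split_ifs <;> norm_num)
lemma v_nonneg {N : ℕ} (w : Fin N → Prop) : 0 ≤ v w :=
  Finset.sum_nonneg (fun i _ => by split_ifs <;> norm_num)
lemma u_add_v {N : ℕ} (w : Fin N → Prop) : u w + v w = N := by
  unfold u v
  rw [← Finset.sum_add_distrib]
  rw [Finset.sum_congr rfl (g := fun _ => (1 : ℝ)) (fun i _ => by split_ifs <;> norm_num)]
  simp
lemma u_comp {N : ℕ} (w : Fin N → Prop) (e : Equiv.Perm (Fin N)) : u (w ∘ e) = u w :=
  Equiv.sum_comp e (fun k => if w k then (1 : ℝ) else 0)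
lemma v_comp {N : ℕ} (w : Fin N → Prop) (e : Equiv.Perm (Fin N)) : v (w ∘ e) = v w :=
  Equiv.sum_comp e (fun k => if w k then (0 : ℝ) else 1)
lemma u_succ {N : ℕ} (w : Fin (N + 1) → Prop) :
    u w = (if w 0 then 1 else 0) + u (w ∘ Fin.succ) := by
  unfold u; rw [Fin.sum_univ_succ]; rfl
lemma v_succ {N : ℕ} (w : Fin (N + 1) → Prop) :
    v w = (if w 0 then 0 else 1) + v (w ∘ Fin.succ) := by
  unfold v; rw [Fin.sum_univ_succ]; rfl
lemma U_succ {N : ℕ} (w : Fin (N + 1) → Prop) :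
    U w = (if w 0 then v w else 0) + U (w ∘ Fin.succ) := by
  rw [v_succ]
  by_cases h : w 0
  · simp [U, v, Fin.sum_univ_succ, h, -Finset.sum_boole]
  · simp [U, Fin.sum_univ_succ, h, -Finset.sum_boole]

lemma mgf (θ : ℝ) : ∀ (N : ℕ) (s : Fin N → Prop),
    ∑ σ : Equiv.Perm (Fin N), Real.exp (θ * (U (s ∘ σ) - u s * v s / 2))
      ≤ (Nat.factorial N : ℝ) * Real.exp (θ ^ 2 / 2 * (u s * v s * (N + 1))) := by
  intro N
  induction N with
  | zero => intro s; simp [U, u, v]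
  | succ N ih =>
    intro s
    set m := u s with hm
    set n := v s with hn
    have hm0 : 0 ≤ m := u_nonneg s
    have hn0 : 0 ≤ n := v_nonneg s
    have hM : m + n = N + 1 := by have := u_add_v s; push_cast at this; exact this
    set A := Real.exp (θ * n / 2 + θ ^ 2 / 2 * ((m - 1) * n * (N + 1))) with hA
    set B := Real.exp (-(θ * m / 2) + θ ^ 2 / 2 * (m * (n - 1) * (N + 1))) with hB
    rw [← Equiv.sum_comp Equiv.Perm.decomposeFin.symm, Fintype.sum_prod_type]
    have step : ∀ p : Fin (N + 1), ∑ e : Equiv.Perm (Fin N),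
        Real.exp (θ * (U (s ∘ (Equiv.Perm.decomposeFin.symm (p, e))) - m * n / 2))
        ≤ (Nat.factorial N : ℝ) * (if s p then A else B) := by
      intro p
      have hs : ∀ e : Equiv.Perm (Fin N),
          (s ∘ (Equiv.Perm.decomposeFin.symm (p, e))) ∘ Fin.succ
            = (s ∘ (Equiv.swap 0 p) ∘ Fin.succ) ∘ e := by
        intro e; funext i; simp
      have h0 : ∀ e : Equiv.Perm (Fin N), s (Equiv.Perm.decomposeFin.symm (p, e) 0) = s p := by
        intro e; simp
      have hu := u_succ (s ∘ (Equiv.swap 0 p))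
      have hv := v_succ (s ∘ (Equiv.swap 0 p))
      rw [u_comp] at hu
      rw [v_comp] at hv
      simp only [Function.comp_apply, Equiv.swap_apply_left, Function.comp_assoc] at hu hv
      have I := ih (s ∘ (Equiv.swap 0 p) ∘ Fin.succ)
      rw [← hm] at hu
      rw [← hn] at hv
      simp only [U_succ, hs, Function.comp_apply, h0, v_comp, ← hn]
      by_cases h : s p
      · simp only [h, if_true] at hu hv ⊢
        have hu' : u (s ∘ (Equiv.swap 0 p) ∘ Fin.succ) = m - 1 := by linarith
        have hv' : v (s ∘ (Equiv.swap 0 p) ∘ Fin.succ) = n := by linarith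
        rw [hu', hv'] at I
        have J := mul_le_mul_of_nonneg_left I (Real.exp_pos (θ * n / 2)).le
        rw [Finset.mul_sum] at J
        calc _ = _ := Finset.sum_congr rfl (fun e _ => by
                rw [← Real.exp_add]; congr 1; ring)
          _ ≤ _ := J
          _ = _ := by rw [hA, Real.exp_add]; ring
      · simp only [h, if_false] at hu hv ⊢
        have hu' : u (s ∘ (Equiv.swap 0 p) ∘ Fin.succ) = m := by linarith
        have hv' : v (s ∘ (Equiv.swap 0 p) ∘ Fin.succ) = n - 1 := by linarith
        rw [hu', hv'] at I
        have J := mul_le_mul_of_nonneg_left I (Real.exp_pos (-(θ * m / 2))).le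
        rw [Finset.mul_sum] at J
        calc _ = _ := Finset.sum_congr rfl (fun e _ => by
                rw [← Real.exp_add]; congr 1; ring)
          _ ≤ _ := J
          _ = _ := by rw [hB, Real.exp_add]; ring
    refine (Finset.sum_le_sum (fun p _ => step p)).trans ?_
    rw [← Finset.mul_sum]
    have hsum : ∑ p, (if s p then A else B) = m * A + n * B := by
      rw [hm, hn, u, v, Finset.sum_mul, Finset.sum_mul, ← Finset.sum_add_distrib]
      exact Finset.sum_congr rfl (fun i _ => by split_ifs <;> simp)
    rw [hsum]
    have hN : (0 : ℝ) < N + 1 := by positivity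
    have k := key (m / (N + 1)) (n / (N + 1)) (-(θ * (N + 1) / 2)) (by positivity) (by positivity)
      (by rw [← add_div, hM, div_self hN.ne'])
    set R := Real.exp (θ ^ 2 / 2 * (m * n * (((N + 1 : ℕ) : ℝ) + 1))) with hR
    have hRp : 0 < R := Real.exp_pos _
    have hA' : A ≤ R * Real.exp (-(n / (N + 1) * -(θ * (N + 1) / 2))
        - 2 * (n / (N + 1)) * (-(θ * (N + 1) / 2)) ^ 2) := by
      rw [hA, hR, ← Real.exp_add]
      apply Real.exp_le_exp.2
      have : -(n / (N + 1) * -(θ * (N + 1) / 2)) - 2 * (n / (N + 1)) * (-(θ * (N + 1) / 2)) ^ 2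
        = θ * n / 2 - θ ^ 2 / 2 * (n * (N + 1)) := by field_simp
      rw [this]; push_cast
      have : 0 ≤ θ ^ 2 * (m * n) := by positivity
      nlinarith
    have hB' : B ≤ R * Real.exp ((m / (N + 1) * -(θ * (N + 1) / 2))
        - 2 * (m / (N + 1)) * (-(θ * (N + 1) / 2)) ^ 2) := by
      rw [hB, hR, ← Real.exp_add]
      apply Real.exp_le_exp.2
      have : (m / (N + 1) * -(θ * (N + 1) / 2)) - 2 * (m / (N + 1)) * (-(θ * (N + 1) / 2)) ^ 2
        = -(θ * m / 2) - θ ^ 2 / 2 * (m * (N + 1)) := by field_simp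
      rw [this]; push_cast
      have : 0 ≤ θ ^ 2 * (m * n) := by positivity
      nlinarith
    have fin : m * A + n * B ≤ (N + 1) * R := by
      have a1 := mul_le_mul_of_nonneg_left hA' hm0
      have a2 := mul_le_mul_of_nonneg_left hB' hn0
      have a3 := mul_le_mul_of_nonneg_left k (mul_nonneg hN.le hRp.le)
      refine (add_le_add a1 a2).trans (le_trans (le_of_eq ?_) (a3.trans_eq (mul_one _)))
      field_simp
    rw [Nat.factorial_succ]
    push_cast
    have := mul_le_mul_of_nonneg_left fin (Nat.cast_nonneg (α := ℝ) (Nat.factorial N))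
    refine this.trans (le_of_eq (by ring))

noncomputable def Q {N : ℕ} (m : ℕ) (z : Fin N → ℝ) (σ : Equiv.Perm (Fin N)) : ℝ :=
  ∑ i : Fin N, ∑ j : Fin N,
              (if (i : ℕ) < m ∧ m ≤ (j : ℕ) then (1 : ℝ) else 0) *
              (if z (σ i) < z (σ j) then (1 : ℝ) else 0)

lemma Q_eq {N : ℕ} (m : ℕ) (z : Fin N → ℝ) (ρ σ : Equiv.Perm (Fin N))
    (hρ : StrictMono (z ∘ ρ)) :
    Q m z σ = U ((fun i : Fin N => (i : ℕ) < m) ∘ (σ⁻¹ * ρ : Equiv.Perm (Fin N))) := by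
  unfold Q U
  rw [← Equiv.sum_comp (σ⁻¹ * ρ : Equiv.Perm (Fin N))]
  refine Finset.sum_congr rfl (fun k _ => ?_)
  rw [← Equiv.sum_comp (σ⁻¹ * ρ : Equiv.Perm (Fin N))]
  refine Finset.sum_congr rfl (fun l _ => ?_)
  have : z (ρ k) < z (ρ l) ↔ k < l := hρ.lt_iff_lt
  have e : ∀ x, σ ((σ⁻¹ * ρ : Equiv.Perm (Fin N)) x) = ρ x := fun x => by simp
  simp only [e, this, Function.comp_apply, not_lt]
  by_cases h : k < l <;> simp only [h, true_and, false_and, if_true, if_false, mul_one, mul_zero]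

lemma exists_sort {N : ℕ} (z : Fin N → ℝ) (hz : Function.Injective z) :
    ∃ ρ : Equiv.Perm (Fin N), StrictMono (z ∘ ρ) :=
  ⟨Tuple.sort z, (Tuple.monotone_sort z).strictMono_of_injective
    (hz.comp (Tuple.sort z).injective)⟩

lemma uv (m N : ℕ) : (u (fun i : Fin N => (i : ℕ) < m)) * v (fun i : Fin N => (i : ℕ) < m)
    = ∑ i : Fin N, ∑ j : Fin N, (if (i : ℕ) < m ∧ m ≤ (j : ℕ) then (1 : ℝ) else 0) := by
  unfold u v
  rw [Finset.sum_mul_sum]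
  refine Finset.sum_congr rfl (fun k _ => Finset.sum_congr rfl (fun l _ => ?_))
  by_cases h : (k : ℕ) < m <;> by_cases h' : (l : ℕ) < m <;> simp [h, h']

lemma u_val (m n : ℕ) : u (fun i : Fin (m + n) => (i : ℕ) < m) = m := by
  simp [u, Fin.sum_univ_add]
lemma v_val (m n : ℕ) : v (fun i : Fin (m + n) => (i : ℕ) < m) = n := by
  simp [v, Fin.sum_univ_add]

lemma pair {N : ℕ} (z : Fin N → ℝ) (hz : Function.Injective z) (i j : Fin N) (hij : i ≠ j) :
    ∑ σ : Equiv.Perm (Fin N), (if z (σ i) < z (σ j) then (1 : ℝ) else 0)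
      = (Nat.factorial N : ℝ) / 2 := by
  have h1 : ∑ σ : Equiv.Perm (Fin N), (if z (σ i) < z (σ j) then (1 : ℝ) else 0)
      = ∑ σ : Equiv.Perm (Fin N), (if z (σ j) < z (σ i) then (1 : ℝ) else 0) := by
    rw [← Equiv.sum_comp (Equiv.mulRight (Equiv.swap i j))]
    simp
  have h2 : ∑ σ : Equiv.Perm (Fin N), (if z (σ i) < z (σ j) then (1 : ℝ) else 0)
      + ∑ σ : Equiv.Perm (Fin N), (if z (σ j) < z (σ i) then (1 : ℝ) else 0)
      = (Nat.factorial N : ℝ) := by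
    rw [← Finset.sum_add_distrib, Finset.sum_congr rfl (g := fun _ => (1 : ℝ))]
    · simp [Fintype.card_perm]
    · intro σ _
      have : z (σ i) ≠ z (σ j) := fun h => hij (σ.injective (hz h))
      rcases lt_or_gt_of_ne this with h | h
      · simp [h, h.le]
      · simp [h, h.le]
  linarith

lemma mean {N : ℕ} (m : ℕ) (z : Fin N → ℝ) (hz : Function.Injective z) :
    permExp N (Q m z) = (u (fun i : Fin N => (i : ℕ) < m))
      * v (fun i : Fin N => (i : ℕ) < m) / 2 := by
  have hf : (Nat.factorial N : ℝ) ≠ 0 := by positivity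
  have : ∑ σ, Q m z σ = (Nat.factorial N : ℝ) / 2 *
      ∑ i : Fin N, ∑ j : Fin N, (if (i : ℕ) < m ∧ m ≤ (j : ℕ) then (1 : ℝ) else 0) := by
    unfold Q
    rw [Finset.sum_comm, Finset.mul_sum]
    refine Finset.sum_congr rfl (fun i _ => ?_)
    rw [Finset.sum_comm, Finset.mul_sum]
    refine Finset.sum_congr rfl (fun j _ => ?_)
    rw [← Finset.mul_sum]
    by_cases h : (i : ℕ) < m ∧ m ≤ (j : ℕ)
    · rw [pair z hz i j (by rintro rfl; omega)]; simp [h]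
    · simp [h]
  rw [permExp, this, uv]
  field_simp

lemma tail {N : ℕ} (m : ℕ) (z : Fin N → ℝ) (hz : Function.Injective z) (t V : ℝ) (ht : 0 < t)
    (hV : V = u (fun i : Fin N => (i : ℕ) < m) * v (fun i : Fin N => (i : ℕ) < m) * (N + 1))
    (hV0 : 0 < V) :
    permProb N (fun σ => Q m z σ - permExp N (Q m z) > t) ≤ Real.exp (-(t ^ 2 / (2 * V))) := by
  obtain ⟨ρ, hρ⟩ := exists_sort z hz
  rw [mean m z hz, permProb]
  have hf : (0 : ℝ) < (Nat.factorial N : ℝ) := by positivity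
  rw [div_le_iff₀ hf]
  have M := mgf (t / V) N (fun i : Fin N => (i : ℕ) < m)
  set c := u (fun i : Fin N => (i : ℕ) < m) * v (fun i : Fin N => (i : ℕ) < m) with hc
  rw [← hV, ← Equiv.sum_comp ((Equiv.inv (Equiv.Perm (Fin N))).trans (Equiv.mulRight ρ))] at M
  simp only [Equiv.trans_apply, Equiv.inv_apply, Equiv.coe_mulRight, ← Q_eq m z ρ _ hρ] at M
  have L : ((Finset.univ.filter (fun σ => Q m z σ - c / 2 > t)).card : ℝ) * Real.exp (t / V * t)
      ≤ ∑ σ, Real.exp (t / V * (Q m z σ - c / 2)) := by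
    rw [← nsmul_eq_mul]
    refine (Finset.card_nsmul_le_sum _ (fun σ => Real.exp (t / V * (Q m z σ - c / 2))) _ ?_).trans
      (Finset.sum_le_sum_of_subset_of_nonneg (Finset.subset_univ _)
        (fun _ _ _ => (Real.exp_pos _).le))
    intro σ hσ
    have := (Finset.mem_filter.1 hσ).2
    apply Real.exp_le_exp.2
    exact mul_le_mul_of_nonneg_left this.le (by positivity)
  have L2 := L.trans M
  rw [← le_div_iff₀ (Real.exp_pos _), mul_div_assoc (Nat.factorial N : ℝ), ← Real.exp_sub] at L2
  refine L2.trans (le_of_eq ?_)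
  rw [mul_comm]
  congr 2
  field_simp
  ring

end MWW


/-- Concentration of the permuted Mann–Whitney–Wilcoxon statistic.  Here the
first `m` indices of `Fin (m+n)` correspond to the first sample and the last
`n` indices to the second sample, and `z` lists the pairwise-distinct pooled
observations. -/
theorem mann_whitney_wilcoxon_tail :
    ∃ K : ℝ, 0 < K ∧
      ∀ (m n N : ℕ), 0 < m → 0 < n → N = m + n → 20 ≤ N →
      ∀ (z : Fin N → ℝ), Function.Injective z →
      ∀ t : ℝ, 0 < t →
        permProb N (fun σ =>
            (∑ i : Fin N, ∑ j : Fin N,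
              (if (i : ℕ) < m ∧ m ≤ (j : ℕ) then (1 : ℝ) else 0) *
              (if z (σ i) < z (σ j) then (1 : ℝ) else 0))
              - permExp N (fun σ' => ∑ i : Fin N, ∑ j : Fin N,
                  (if (i : ℕ) < m ∧ m ≤ (j : ℕ) then (1 : ℝ) else 0) *
                  (if z (σ' i) < z (σ' j) then (1 : ℝ) else 0)) > t)
          ≤ Real.exp (-(K * t ^ 2 / ((N : ℝ) * (m : ℝ) * (n : ℝ) + (N : ℝ) * t)))
            + Real.exp (-(K * t ^ 2 /
                ((m : ℝ) ^ 2 * (n : ℝ) ^ 2 / (N : ℝ) ^ 2 +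
                  Real.sqrt ((m : ℝ) * (n : ℝ)) * t))) := by
  refine ⟨1 / 4, by norm_num, ?_⟩
  intro m n N hm hn hN hN20 z hz t ht
  subst hN
  have hm' : (0 : ℝ) < m := by exact_mod_cast hm
  have hn' : (0 : ℝ) < n := by exact_mod_cast hn
  have h20 : (20 : ℝ) ≤ ((m + n : ℕ) : ℝ) := by exact_mod_cast hN20
  have T := MWW.tail m z hz t ((m : ℝ) * n * (((m + n : ℕ) : ℝ) + 1)) ht
    (by rw [MWW.u_val, MWW.v_val]) (by positivity)
  have T' : Real.exp (-(t ^ 2 / (2 * ((m : ℝ) * n * (((m + n : ℕ) : ℝ) + 1)))))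
      ≤ Real.exp (-(1 / 4 * t ^ 2 / (((m + n : ℕ) : ℝ) * (m : ℝ) * (n : ℝ)
        + ((m + n : ℕ) : ℝ) * t))) := by
    apply Real.exp_le_exp.2
    apply neg_le_neg
    set W : ℝ := ((m + n : ℕ) : ℝ)
    rw [div_le_div_iff₀ (by positivity) (by positivity)]
    have h1 : 0 < (m : ℝ) * n := by positivity
    have h2 : 0 < W * t := by positivity
    have h3 : 1 / 4 * (2 * ((m : ℝ) * n * (W + 1))) ≤ W * m * n + W * t := by nlinarith
    nlinarith [mul_le_mul_of_nonneg_left h3 (sq_nonneg t)]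
  exact (T.trans T').trans (le_add_of_nonneg_right (Real.exp_pos _).le)
end
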